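/- Let 0<r<1, 1<p<∞, α>0 and β∈ℝ, and let p' satisfy 1/p+1/p'=1. Then for every integer n ≥ n₀(α,r,p) one has E_n(C^{α,r}_{β,p})_C = e^{-α n^r} n^{(1-r)/p} [ (‖cos t‖_{p'} / (π^{1+1/p'} (αr)^{1/p})) · (∫_0^∞ dt/(t²+1)^{p'/2})^{1/p'} + γ_n · ( (1/(p'−1)) (αr)^{(p'−1)/p} n^{-(1-r)(p'−1)} + p^{1/p'} (αr)^{-(1+1/p)} n^{-r} + n^{-(1-r)/p} ) ], where the quantity γ_n = γ_n(α,r,β,p) satisfies |γ_n| ≤ (14π)². -/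

import Mathlib

open MeasureTheory Real Filter
open scoped ENNReal

/-- The generalized Poisson kernel `P_{α,r,β}(t) = Σ_{k=1}^∞ e^{-α k^r} cos(kt − βπ/2)`. -/
noncomputable def genPoissonKernel (α r β : ℝ) (t : ℝ) : ℝ :=
  ∑' k : ℕ, Real.exp (-α * ((k : ℝ) + 1) ^ r) * Real.cos (((k : ℝ) + 1) * t - β * π / 2)

/-- Fourier cosine coefficient `a_k = (1/π)∫_{-π}^{π} f(t) cos(kt) dt`. -/
noncomputable def fourierCoefA (f : ℝ → ℝ) (k : ℕ) : ℝ :=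
  (1 / π) * ∫ t in (-π)..π, f t * Real.cos (k * t)

/-- Fourier sine coefficient `b_k = (1/π)∫_{-π}^{π} f(t) sin(kt) dt`. -/
noncomputable def fourierCoefB (f : ℝ → ℝ) (k : ℕ) : ℝ :=
  (1 / π) * ∫ t in (-π)..π, f t * Real.sin (k * t)

/-- Partial Fourier sum of order `m` of `f`. -/
noncomputable def fourierSum (m : ℕ) (f : ℝ → ℝ) (x : ℝ) : ℝ :=
  fourierCoefA f 0 / 2 +
    ∑ k ∈ Finset.Icc 1 m, (fourierCoefA f k * Real.cos (k * x) + fourierCoefB f k * Real.sin (k * x))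

/-- The class `C^{α,r}_{β,p}` of generalized Poisson integrals. -/
def poissonClass (α r β : ℝ) (p : ℝ≥0∞) : Set (ℝ → ℝ) :=
  {f | (∀ x, f (x + 2 * π) = f x) ∧ ∃ a₀ : ℝ, ∃ φ : ℝ → ℝ,
    (∀ x, φ (x + 2 * π) = φ x) ∧
    eLpNorm φ p (volume.restrict (Set.Ioc (0 : ℝ) (2 * π))) ≤ 1 ∧
    (∫ t in (0 : ℝ)..(2 * π), φ t) = 0 ∧
    ∀ x, f x = a₀ / 2 + (1 / π) * ∫ t in (-π)..π, genPoissonKernel α r β (x - t) * φ t}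

/-- `E_n(C^{α,r}_{β,p})_C`: uniform deviation of Fourier sums of order `n-1` on the class. -/
noncomputable def EnC (α r β : ℝ) (p : ℝ≥0∞) (n : ℕ) : ℝ :=
  ⨆ f ∈ poissonClass α r β p, ⨆ x : ℝ, |f x - fourierSum (n - 1) f x|

/-- `‖cos‖_{L_{p'}}` over a period, real exponent. -/
noncomputable def cosNormR (s : ℝ) : ℝ :=
  (∫ t in (0 : ℝ)..(2 * π), |Real.cos t| ^ s) ^ (1 / s)

/-- `n₀(α,r,p)` for finite `1 < p < ∞`. -/
noncomputable def n₀fin (α r p : ℝ) : ℕ :=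
  sInf {n : ℕ | 0 < n ∧
    1 / (α * r) * (n : ℝ) ^ (-r) + α * r * p * (n : ℝ) ^ (-(1 - r)) ≤
      (1 / (3 * π) ^ 3) * (p - 1) / p}



/-- real `L_s` norm over a period -/
noncomputable def gpN {E : Type} [NormedAddCommGroup E] (s : ℝ) (F : ℝ → E) : ℝ :=
  (∫ t in (-π)..π, ‖F t‖ ^ s) ^ (1 / s)

lemma gp_pi_le : -π ≤ π := by linarith [Real.pi_pos]

section
variable {E : Type} [NormedAddCommGroup E]

lemma gp_memLp {s : ℝ} {F : ℝ → E} (hF : Continuous F) :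
    MemLp F (ENNReal.ofReal s) (volume.restrict (Set.Ioc (-π) π)) := by
  obtain ⟨C, hC⟩ := (isCompact_Icc (a := -π) (b := π)).exists_bound_of_continuousOn hF.continuousOn
  refine MemLp.of_bound ?_ C ?_
  · exact (hF.locallyIntegrable (μ := volume)).integrableOn_isCompact isCompact_Icc |>.mono_set
      Set.Ioc_subset_Icc_self |>.aestronglyMeasurable
  · filter_upwards [ae_restrict_mem measurableSet_Ioc] with x hx
    exact hC x (Set.Ioc_subset_Icc_self hx)

lemma gpN_eq_lpNorm {s : ℝ} (hs : 1 < s) {F : ℝ → E}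
    (hF : AEStronglyMeasurable F (volume.restrict (Set.Ioc (-π) π))) :
    gpN s F = lpNorm F (ENNReal.ofReal s) (volume.restrict (Set.Ioc (-π) π)) := by
  rw [lpNorm_eq_integral_norm_rpow_toReal (by simp; linarith) (by simp) hF,
    ENNReal.toReal_ofReal (by linarith), gpN, intervalIntegral.integral_of_le gp_pi_le, one_div]

lemma gpN_nonneg (s : ℝ) (F : ℝ → E) : 0 ≤ gpN s F := by
  unfold gpN
  exact Real.rpow_nonneg (intervalIntegral.integral_nonneg gp_pi_le
    fun t _ => Real.rpow_nonneg (norm_nonneg _) _) _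

lemma gpN_pow {s : ℝ} (hs : 1 < s) (F : ℝ → E) : gpN s F ^ s = ∫ t in (-π)..π, ‖F t‖ ^ s := by
  unfold gpN
  rw [← Real.rpow_mul (intervalIntegral.integral_nonneg gp_pi_le
    fun t _ => Real.rpow_nonneg (norm_nonneg _) _), one_div, inv_mul_cancel₀ (by linarith),
    Real.rpow_one]

lemma gpN_sub_le {s : ℝ} (hs : 1 < s) {F G : ℝ → E} (hF : Continuous F) (hG : Continuous G) :
    gpN s (fun t => F t - G t) ≤ gpN s F + gpN s G := by
  have h1 : (1 : ℝ≥0∞) ≤ ENNReal.ofReal s := by simp [hs.le]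
  change gpN s (F - G) ≤ _
  rw [gpN_eq_lpNorm hs (gp_memLp (s := s) (hF.sub hG)).1, gpN_eq_lpNorm hs (gp_memLp (s := s) hF).1,
    gpN_eq_lpNorm hs (gp_memLp (s := s) hG).1]
  exact lpNorm_sub_le (gp_memLp hF) h1

lemma gpN_add_le {s : ℝ} (hs : 1 < s) {F G : ℝ → E} (hF : Continuous F) (hG : Continuous G) :
    gpN s (fun t => F t + G t) ≤ gpN s F + gpN s G := by
  have h1 : (1 : ℝ≥0∞) ≤ ENNReal.ofReal s := by simp [hs.le]
  change gpN s (F + G) ≤ _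
  rw [gpN_eq_lpNorm hs (gp_memLp (s := s) (hF.add hG)).1, gpN_eq_lpNorm hs (gp_memLp (s := s) hF).1,
    gpN_eq_lpNorm hs (gp_memLp (s := s) hG).1]
  exact lpNorm_add_le (gp_memLp hF) h1

lemma gp_intble {s : ℝ} (hs : 1 < s) {F : ℝ → E} (hF : Continuous F) (a b : ℝ) :
    IntervalIntegrable (fun t => ‖F t‖ ^ s) volume a b :=
  (hF.norm.rpow_const fun _ => Or.inr (by linarith)).intervalIntegrable _ _

lemma gpN_mono {E' : Type} [NormedAddCommGroup E'] {s : ℝ} (hs : 1 < s) {F : ℝ → E} {G : ℝ → E'}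
    (hF : Continuous F) (hG : Continuous G) (h : ∀ t ∈ Set.Icc (-π) π, ‖F t‖ ≤ ‖G t‖) :
    gpN s F ≤ gpN s G := by
  unfold gpN
  refine Real.rpow_le_rpow (intervalIntegral.integral_nonneg gp_pi_le
    fun t _ => Real.rpow_nonneg (norm_nonneg _) _) ?_ (by positivity)
  refine intervalIntegral.integral_mono_on gp_pi_le (gp_intble hs hF _ _) (gp_intble hs hG _ _) ?_
  intro t ht
  exact Real.rpow_le_rpow (norm_nonneg _) (h t ht) (by linarith)

lemma gpN_congr {E' : Type} [NormedAddCommGroup E'] {s : ℝ} {F : ℝ → E} {G : ℝ → E'}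
    (h : ∀ t, ‖F t‖ = ‖G t‖) : gpN s F = gpN s G := by
  unfold gpN; simp_rw [h]

lemma gpN_const {s : ℝ} (hs : 1 < s) (c : E) : gpN s (fun _ => c) = (2 * π) ^ (1 / s) * ‖c‖ := by
  unfold gpN
  rw [intervalIntegral.integral_const, smul_eq_mul, Real.mul_rpow (by linarith [Real.pi_pos])
    (by positivity), ← Real.rpow_mul (norm_nonneg _), mul_one_div_cancel (by linarith), Real.rpow_one]
  ring_nf

lemma gpN_mul {s : ℝ} (hs : 1 < s) {c : ℝ} (hc : 0 ≤ c) (F : ℝ → E) :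
    gpN s (fun t => c * ‖F t‖) = c * gpN s F := by
  unfold gpN
  have : ∀ t, ‖c * ‖F t‖‖ ^ s = c ^ s * ‖F t‖ ^ s := by
    intro t
    rw [norm_mul, norm_norm, Real.norm_of_nonneg hc, Real.mul_rpow hc (norm_nonneg _)]
  simp_rw [this]
  rw [intervalIntegral.integral_const_mul, Real.mul_rpow (by positivity)
    (intervalIntegral.integral_nonneg gp_pi_le
    fun t _ => Real.rpow_nonneg (norm_nonneg _) _), ← Real.rpow_mul hc,
    mul_one_div_cancel (by linarith), Real.rpow_one]

lemma gpN_shift {s : ℝ} {F : ℝ → E} (hF : ∀ t, F (t + 2 * π) = F t) (h : ℝ) :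
    gpN s (fun t => F (t + h)) = gpN s F := by
  unfold gpN
  congr 1
  have hp : Function.Periodic (fun t => ‖F t‖ ^ s) (2 * π) := fun t => by simp [hF]
  rw [intervalIntegral.integral_comp_add_right (fun t => ‖F t‖ ^ s) h]
  have := hp.intervalIntegral_add_eq (-π + h) (-π)
  convert this using 2 <;> ring

lemma gpN_neg {s : ℝ} {F : ℝ → E} :
    gpN s (fun t => F (-t)) = gpN s F := by
  unfold gpN
  rw [intervalIntegral.integral_comp_neg (fun t => ‖F t‖ ^ s)]
  simp

/-- domination with a constant -/
lemma gpN_le_mul {E' : Type} [NormedAddCommGroup E'] {s : ℝ} (hs : 1 < s) {c : ℝ} (hc : 0 ≤ c)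
    {F : ℝ → E} {G : ℝ → E'}
    (hF : Continuous F) (hG : Continuous G) (h : ∀ t ∈ Set.Icc (-π) π, ‖F t‖ ≤ c * ‖G t‖) :
    gpN s F ≤ c * gpN s G := by
  rw [← gpN_mul hs hc G]
  refine gpN_mono hs hF (by fun_prop) fun t ht => ?_
  rw [norm_mul, norm_norm, Real.norm_of_nonneg hc]
  exact h t ht

lemma gpN_abs_sub {s : ℝ} (hs : 1 < s) {F G : ℝ → E} (hF : Continuous F) (hG : Continuous G) :
    |gpN s F - gpN s G| ≤ gpN s (fun t => F t - G t) := by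
  have h1 := gpN_add_le hs (hF.sub hG) hG
  have h2 := gpN_sub_le hs hF (hF.sub hG)
  simp only [Pi.sub_apply, sub_add_cancel, sub_sub_cancel] at h1 h2
  change gpN s F ≤ gpN s (fun t => F t - G t) + gpN s G at h1
  change gpN s G ≤ gpN s F + gpN s (fun t => F t - G t) at h2
  rw [abs_le]; constructor <;> linarith

end


/-- the rotated real part -/
noncomputable def gpR (n : ℕ) (u : ℝ) (F : ℝ → ℂ) (t : ℝ) : ℝ :=
  (Complex.exp (((n * t + u : ℝ) : ℂ) * Complex.I) * F t).re

lemma gpR_cont (n : ℕ) (u : ℝ) {F : ℝ → ℂ} (hF : Continuous F) : Continuous (gpR n u F) := by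
  unfold gpR; fun_prop

lemma gp_re_cos (x : ℝ) (z : ℂ) :
    (Complex.exp ((x : ℂ) * Complex.I) * z).re = ‖z‖ * Real.cos (x + z.arg) := by
  conv_lhs => rw [← Complex.norm_mul_exp_arg_mul_I z]
  rw [mul_left_comm, ← Complex.exp_add, ← add_mul, ← Complex.ofReal_add, Complex.re_ofReal_mul,
    Complex.exp_ofReal_mul_I_re]

lemma gpR_le (n : ℕ) (u : ℝ) (F : ℝ → ℂ) (t : ℝ) : ‖gpR n u F t‖ ≤ ‖F t‖ := by
  unfold gpR
  refine (Complex.abs_re_le_norm _).trans ?_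
  rw [norm_mul, Complex.norm_exp_ofReal_mul_I, one_mul]

lemma gp_avg_int {s : ℝ} (hs : 1 < s) {F : ℝ → ℂ} (hF : Continuous F) (n : ℕ) (c : ℝ) :
    ∫ u in (c - π)..(c + π), gpN s (gpR n u F) ^ s =
      (∫ t in (0 : ℝ)..(2 * π), |Real.cos t| ^ s) * gpN s F ^ s := by
  simp_rw [gpN_pow hs]
  have hc : Continuous (Function.uncurry fun u t => ‖gpR n u F t‖ ^ s) := by
    refine Continuous.rpow_const ?_ fun _ => Or.inr (by linarith)
    unfold gpR; fun_prop
  have hsw : ∫ u in (c - π)..(c + π), ∫ t in (-π)..π, ‖gpR n u F t‖ ^ s =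
      ∫ t in (-π)..π, ∫ u in (c - π)..(c + π), ‖gpR n u F t‖ ^ s := by
    simp_rw [intervalIntegral.integral_of_le (show c - π ≤ c + π by linarith [Real.pi_pos]),
      intervalIntegral.integral_of_le gp_pi_le]
    refine integral_integral_swap ?_
    rw [Measure.prod_restrict]
    refine IntegrableOn.mono_set ?_ (Set.prod_mono Set.Ioc_subset_Icc_self Set.Ioc_subset_Icc_self)
    exact hc.continuousOn.integrableOn_compact (isCompact_Icc.prod isCompact_Icc)
  rw [hsw]
  · rw [← intervalIntegral.integral_const_mul]
    refine intervalIntegral.integral_congr fun t _ => ?_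
    have h1 : ∀ u, ‖gpR n u F t‖ ^ s = ‖F t‖ ^ s * |Real.cos (u + (n * t + (F t).arg))| ^ s := by
      intro u
      unfold gpR
      rw [gp_re_cos, norm_mul, norm_norm, Real.mul_rpow (norm_nonneg _) (norm_nonneg _),
        Real.norm_eq_abs]
      congr 4; ring
    simp_rw [h1]
    rw [intervalIntegral.integral_const_mul, mul_comm]
    congr 1
    rw [intervalIntegral.integral_comp_add_right (fun u => |Real.cos u| ^ s)]
    have hp : Function.Periodic (fun u => |Real.cos u| ^ s) (2 * π) := fun u => by simp
    have := hp.intervalIntegral_add_eq (c - π + (n * t + (F t).arg)) 0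
    rw [zero_add] at this
    rw [← this]; congr 1; ring

lemma gp_avg {s : ℝ} (hs : 1 < s) {F : ℝ → ℂ} (hF : Continuous F)
    (hp : ∀ t, F (t + 2 * π) = F t) {n : ℕ} (hn : 0 < n) (c η : ℝ)
    (hη : ∀ h, |h| ≤ π / n → gpN s (fun t => F (t + h) - F t) ≤ η) :
    |gpN s (gpR n c F) - cosNormR s / (2 * π) ^ (1 / s) * gpN s F| ≤ η := by
  have hpi := Real.pi_pos
  have hn' : (0 : ℝ) < n := by exact_mod_cast hn
  have key : ∀ u ∈ Set.Icc (c - π) (c + π), |gpN s (gpR n u F) - gpN s (gpR n c F)| ≤ η := by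
    intro u hu
    set h := (u - c) / n with hh
    have hnh : n * h = u - c := by rw [hh]; field_simp
    have hG : Continuous (gpR n c (fun t => F (t + (-h)))) := gpR_cont _ _ (by fun_prop)
    have e1 : gpN s (gpR n u F) = gpN s (gpR n c (fun t => F (t + (-h)))) := by
      rw [← gpN_shift (F := gpR n c (fun t => F (t + (-h)))) _ h]
      · congr 1; ext t
        unfold gpR
        simp only [add_neg_cancel_right]
        congr 5
        rw [mul_add, hnh]; ring
      · intro t
        unfold gpR
        have : F (t + 2 * π + -h) = F (t + -h) := by
          rw [show t + 2 * π + -h = t + -h + 2 * π by ring, hp]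
        simp only [this]
        congr 2
        rw [show ((n * (t + 2 * π) + c : ℝ) : ℂ) * Complex.I =
          ((n * t + c : ℝ) : ℂ) * Complex.I + n * (2 * π * Complex.I) by push_cast; ring]
        rw [Complex.exp_add, Complex.exp_nat_mul_two_pi_mul_I, mul_one]
    rw [e1]
    refine (gpN_abs_sub hs hG (gpR_cont _ _ hF)).trans ?_
    refine le_trans ?_ (hη (-h) ?_)
    · refine gpN_mono hs (hG.sub (gpR_cont _ _ hF)) (by fun_prop) fun t _ => ?_
      have : gpR n c (fun t => F (t + (-h))) t - gpR n c F t
          = gpR n c (fun t => F (t + (-h)) - F t) t := by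
        unfold gpR; rw [mul_sub, Complex.sub_re]
      rw [this]
      exact gpR_le _ _ _ _
    · rw [abs_neg, hh, abs_div, abs_of_pos hn']
      gcongr
      rw [abs_le]; constructor <;> linarith [hu.1, hu.2]
  set A := cosNormR s / (2 * π) ^ (1 / s) * gpN s F with hA
  have hcpos : 0 ≤ ∫ t in (0 : ℝ)..(2 * π), |Real.cos t| ^ s :=
    intervalIntegral.integral_nonneg (by linarith) fun t _ => by positivity
  have hcn : 0 ≤ cosNormR s := Real.rpow_nonneg hcpos _
  have hA0 : 0 ≤ A := mul_nonneg (div_nonneg hcn (by positivity)) (gpN_nonneg _ _)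
  have hAs : 2 * π * A ^ s = (∫ t in (0 : ℝ)..(2 * π), |Real.cos t| ^ s) * gpN s F ^ s := by
    rw [hA, Real.mul_rpow (div_nonneg hcn (by positivity)) (gpN_nonneg _ _),
      Real.div_rpow hcn (by positivity), ← Real.rpow_mul (by positivity),
      one_div_mul_cancel (by linarith), Real.rpow_one, cosNormR, ← Real.rpow_mul hcpos,
      one_div_mul_cancel (by linarith), Real.rpow_one]
    field_simp
  have hav := gp_avg_int hs hF n c
  rw [← hAs] at hav
  set Φ := gpN s (gpR n c F) with hΦ
  have hcΦ : IntervalIntegrable (fun u => gpN s (gpR n u F) ^ s) volume (c - π) (c + π) := by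
    simp_rw [gpN_pow hs]
    refine Continuous.intervalIntegrable ?_ _ _
    refine intervalIntegral.continuous_parametric_intervalIntegral_of_continuous' ?_ _ _
    refine Continuous.rpow_const ?_ fun _ => Or.inr (by linarith)
    unfold gpR; fun_prop
  rw [abs_le]
  constructor
  · by_contra hcon
    push Not at hcon
    have h1 : ∀ u ∈ Set.Icc (c - π) (c + π), gpN s (gpR n u F) ^ s ≤ (Φ + η) ^ s := by
      intro u hu
      refine Real.rpow_le_rpow (gpN_nonneg _ _) ?_ (by linarith)
      linarith [(abs_le.1 (key u hu)).2]
    have h2 := intervalIntegral.integral_mono_on (by linarith) hcΦ (by simp) h1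
    rw [hav, intervalIntegral.integral_const, smul_eq_mul] at h2
    have h0 : 0 ≤ Φ + η := by
      have := key c ⟨by linarith, by linarith⟩
      have := gpN_nonneg s (gpR n c F)
      have : 0 ≤ η := by linarith [(abs_nonneg (gpN s (gpR n c F) - gpN s (gpR n c F)))]
      linarith
    have h3 : (Φ + η) ^ s < A ^ s := Real.rpow_lt_rpow h0 (by linarith) (by linarith)
    nlinarith
  · by_contra hcon
    push Not at hcon
    have h1 : ∀ u ∈ Set.Icc (c - π) (c + π), (Φ - η) ^ s ≤ gpN s (gpR n u F) ^ s := by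
      intro u hu
      refine Real.rpow_le_rpow (by linarith) ?_ (by linarith)
      linarith [(abs_le.1 (key u hu)).1]
    have h2 := intervalIntegral.integral_mono_on (by linarith) (by simp) hcΦ h1
    rw [hav, intervalIntegral.integral_const, smul_eq_mul] at h2
    have h3 : A ^ s < (Φ - η) ^ s := Real.rpow_lt_rpow hA0 (by linarith) (by linarith)
    nlinarith


lemma gp_sum_sq {l : ℝ} (hl : 0 < l) (hl1 : l ≤ 1) :
    Summable (fun k : ℕ => l / (1 + l * k) ^ 2) ∧ ∑' k : ℕ, l / (1 + l * k) ^ 2 ≤ 2 := by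
  have h : ∀ K : ℕ, ∑ k ∈ Finset.range (K + 1), l / (1 + l * k) ^ 2 ≤ l + 1 - 1 / (1 + l * K) := by
    intro K
    induction K with
    | zero => simp
    | succ K ih =>
      rw [Finset.sum_range_succ]
      have : l / (1 + l * ((K + 1 : ℕ) : ℝ)) ^ 2 ≤
          1 / (1 + l * K) - 1 / (1 + l * ((K + 1 : ℕ) : ℝ)) := by
        push_cast
        have h1 : 0 < 1 + l * (K : ℝ) := by positivity
        have h2 : 0 < 1 + l * ((K : ℝ) + 1) := by positivity
        rw [div_sub_div _ _ h1.ne' h2.ne', div_le_div_iff₀ (by positivity) (by positivity)]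
        nlinarith [mul_pos hl (mul_pos hl h2)]
      linarith
  have h2 : ∀ K : ℕ, ∑ k ∈ Finset.range K, l / (1 + l * k) ^ 2 ≤ 2 := by
    intro K
    cases K with
    | zero => simp
    | succ K =>
      have : 0 ≤ 1 / (1 + l * (K : ℝ)) := by positivity
      linarith [h K]
  exact ⟨summable_of_sum_range_le (fun k => by positivity) h2,
    Real.tsum_le_of_sum_range_le (fun k => by positivity) h2⟩

/-- exponent increment -/
noncomputable def gpg (α r n u : ℝ) : ℝ := α * ((n + u) ^ r - n ^ r)

section
variable {α r n u l ε : ℝ}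

lemma gpg_zero : gpg α r n 0 = 0 := by simp [gpg]

lemma gpg_eq (hn : 0 < n) (hu : 0 ≤ u) :
    gpg α r n u = α * n ^ r * ((1 + u / n) ^ r - 1) := by
  unfold gpg
  have : n + u = n * (1 + u / n) := by field_simp
  rw [this, Real.mul_rpow hn.le (by positivity)]; ring

lemma gpg_le (hα : 0 < α) (hr0 : 0 < r) (hr1 : r < 1) (hn : 0 < n)
    (hl : l = α * r * n ^ (r - 1)) (hu : 0 ≤ u) : gpg α r n u ≤ l * u := by
  rw [gpg_eq hn hu]
  have h0 : 0 ≤ u / n := by positivity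
  have h1 := rpow_one_add_le_one_add_mul_self (s := u / n) (by linarith) hr0.le hr1.le
  calc α * n ^ r * ((1 + u / n) ^ r - 1) ≤ α * n ^ r * (r * (u / n)) := by
        gcongr; linarith
    _ = l * u := by rw [hl, Real.rpow_sub_one hn.ne']; field_simp

lemma gpg_ge_log (hα : 0 < α) (hn : 0 < n)
    (hl : l = α * r * n ^ (r - 1)) (hu : 0 ≤ u) :
    l * n * Real.log (1 + u / n) ≤ gpg α r n u := by
  rw [gpg_eq hn hu]
  have h0 : 0 < 1 + u / n := by positivity
  have h1 : r * Real.log (1 + u / n) ≤ (1 + u / n) ^ r - 1 := by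
    rw [Real.rpow_def_of_pos h0]
    have := Real.add_one_le_exp (Real.log (1 + u / n) * r)
    linarith
  calc l * n * Real.log (1 + u / n) = α * n ^ r * (r * Real.log (1 + u / n)) := by
        rw [hl, Real.rpow_sub_one hn.ne']; field_simp
    _ ≤ _ := by gcongr

lemma gpg_exp_le (hα : 0 < α) (hn : 0 < n)
    (hl : l = α * r * n ^ (r - 1)) (hl0 : 0 < l) (hN : 8 ≤ l * n) (hu : 0 ≤ u) :
    Real.exp (-gpg α r n u) ≤ 1 / (1 + l * u / 8) ^ 8 := by
  have h1 := gpg_ge_log hα hn hl hu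
  have h0 : 0 < 1 + u / n := by positivity
  rw [Real.exp_neg, ← one_div]
  have hx : 0 ≤ l * u := by positivity
  refine one_div_le_one_div_of_le (by positivity) ?_
  have h2 : 1 + l * u / 8 ≤ Real.exp (gpg α r n u / 8) := by
    have h3 := one_add_mul_self_le_rpow_one_add (s := u / n)
      (by have : 0 ≤ u / n := by positivity
          linarith) (p := l * n / 8) (by linarith)
    calc 1 + l * u / 8 = 1 + l * n / 8 * (u / n) := by field_simp
      _ ≤ _ := h3
      _ = Real.exp (Real.log (1 + u / n) * (l * n / 8)) := Real.rpow_def_of_pos h0 _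
      _ ≤ _ := by
        apply Real.exp_le_exp.2
        linarith
  calc (1 + l * u / 8) ^ 8 ≤ Real.exp (gpg α r n u / 8) ^ 8 := by gcongr
    _ = _ := by rw [← Real.exp_nat_mul]; congr 1; push_cast; ring

lemma gpg_ge (hα : 0 < α) (hn : 0 < n)
    (hl : l = α * r * n ^ (r - 1)) (hl0 : 0 < l) (hε : ε = 1 / (l * n)) (hu : 0 ≤ u) :
    l * u - gpg α r n u ≤ ε * (l * u) ^ 2 := by
  have h1 := gpg_ge_log hα hn hl hu
  have h0 : 0 < 1 + u / n := by positivity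
  have hy : 0 ≤ u / n := by positivity
  have h2 := Real.one_sub_inv_le_log_of_pos h0
  have h3 : u / n - (u / n) ^ 2 ≤ 1 - (1 + u / n)⁻¹ := by
    rw [show 1 - (1 + u / n)⁻¹ = (u / n) / (1 + u / n) by field_simp; ring, le_div_iff₀ h0]
    nlinarith [pow_nonneg hy 3]
  have h4 : l * n * (u / n - (u / n) ^ 2) ≤ gpg α r n u := by
    refine le_trans ?_ h1
    gcongr; linarith
  have h5 : l * n * (u / n - (u / n) ^ 2) = l * u - ε * (l * u) ^ 2 := by
    rw [hε]; field_simp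
  linarith

lemma gp_poly (x : ℝ) (hx : 0 ≤ x) : x * (1 + x) ≤ 5 * (1 + x / 8) ^ 4 := by
  obtain ⟨y, rfl⟩ : ∃ y, x = 8 * y := ⟨x / 8, by ring⟩
  have hy : 0 ≤ y := by linarith
  rw [show 8 * y / 8 = y by ring]
  nlinarith [mul_nonneg hy (sq_nonneg (y - 1)), sq_nonneg (y ^ 2 - y), sq_nonneg (y ^ 2 - 1),
    sq_nonneg (y - 1), mul_nonneg hy (sq_nonneg (y - 7 / 10)), sq_nonneg (y ^ 2 + 2 * y - 2)]

/-- difference of the coefficient sequences -/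
noncomputable def gpd (α r n l u : ℝ) : ℝ := Real.exp (-gpg α r n u) - Real.exp (-(l * u))

lemma gpd_bd (hα : 0 < α) (hr0 : 0 < r) (hr1 : r < 1) (hn : 0 < n)
    (hl : l = α * r * n ^ (r - 1)) (hl0 : 0 < l) (hε : ε = 1 / (l * n)) (hN : 8 ≤ l * n)
    (hu : 0 ≤ u) : |gpd α r n l u| ≤ 25 * ε / (1 + l * u) ^ 2 := by
  have hx : 0 ≤ l * u := by positivity
  have h1 := gpg_le hα hr0 hr1 hn hl hu
  have h2 := gpg_exp_le hα hn hl hl0 hN hu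
  have h3 := gpg_ge hα hn hl hl0 hε hu
  have hε0 : 0 < ε := by rw [hε]; positivity
  have h4 : 0 ≤ gpd α r n l u := by
    unfold gpd
    rw [sub_nonneg]; apply Real.exp_le_exp.2; linarith
  rw [abs_of_nonneg h4]
  have h5 : gpd α r n l u ≤ Real.exp (-gpg α r n u) * (l * u - gpg α r n u) := by
    unfold gpd
    have h6 := Real.add_one_le_exp (-(l * u - gpg α r n u))
    have h7 : Real.exp (-(l * u)) = Real.exp (-gpg α r n u) * Real.exp (-(l * u - gpg α r n u)) := by
      rw [← Real.exp_add]; congr 1; ring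
    rw [h7]
    nlinarith [Real.exp_pos (-gpg α r n u)]
  have h8 := gp_poly _ hx
  calc gpd α r n l u ≤ Real.exp (-gpg α r n u) * (l * u - gpg α r n u) := h5
    _ ≤ 1 / (1 + l * u / 8) ^ 8 * (ε * (l * u) ^ 2) := by
        apply mul_le_mul h2 h3 (by linarith) (by positivity)
    _ ≤ _ := by
        rw [le_div_iff₀ (by positivity), one_div_mul_eq_div, div_mul_eq_mul_div,
          div_le_iff₀ (by positivity)]
        have : (l * u * (1 + l * u)) ^ 2 ≤ (5 * (1 + l * u / 8) ^ 4) ^ 2 := by gcongr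
        nlinarith

lemma gpd_deriv (hn : 0 < n) (hu : 0 ≤ u) :
    HasDerivAt (gpd α r n l) (l * Real.exp (-(l * u)) -
      α * r * (n + u) ^ (r - 1) * Real.exp (-gpg α r n u)) u := by
  have h0 : n + u ≠ 0 := by positivity
  have h1 : HasDerivAt (fun u => gpg α r n u) (α * (r * (n + u) ^ (r - 1))) u := by
    unfold gpg
    have := ((((hasDerivAt_id u).const_add n).rpow_const (p := r) (Or.inl h0)).sub_const (n ^ r)).const_mul α
    simpa using this
  have h2 := h1.neg.exp
  have h3 : HasDerivAt (fun u => Real.exp (-(l * u))) (Real.exp (-(l * u)) * (-(l * 1))) u :=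
    ((hasDerivAt_id u).const_mul l).neg.exp
  have h4 : HasDerivAt (gpd α r n l) _ u := h2.sub h3
  refine h4.congr_deriv ?_
  simp only [Pi.neg_apply]
  ring

lemma gpd_deriv_bd (hα : 0 < α) (hr0 : 0 < r) (hr1 : r < 1) (hn : 0 < n)
    (hl : l = α * r * n ^ (r - 1)) (hl0 : 0 < l) (hε : ε = 1 / (l * n)) (hN : 8 ≤ l * n)
    (hu : 0 ≤ u) : |l * Real.exp (-(l * u)) -
      α * r * (n + u) ^ (r - 1) * Real.exp (-gpg α r n u)| ≤ 35 * (ε * l) / (1 + l * u) ^ 2 := by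
  have hx : 0 ≤ l * u := by positivity
  have h1 := gpd_bd hα hr0 hr1 hn hl hl0 hε hN hu
  have h2 := gpg_exp_le hα hn hl hl0 hN hu
  have hε0 : 0 < ε := by rw [hε]; positivity
  have h0 : 0 < 1 + u / n := by positivity
  have hy : 0 ≤ u / n := by positivity
  set G := α * r * (n + u) ^ (r - 1) with hG
  have hGe : G = l * (1 + u / n) ^ (r - 1) := by
    rw [hG, hl, show n + u = n * (1 + u / n) by field_simp, Real.mul_rpow hn.le h0.le]; ring
  have hG1 : G ≤ l := by
    rw [hGe]
    have : (1 + u / n) ^ (r - 1) ≤ 1 := Real.rpow_le_one_of_one_le_of_nonpos (by linarith) (by linarith)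
    nlinarith
  have hG2 : l - G ≤ l * (ε * (l * u)) := by
    have h3 : (1 + u / n) ^ (-1 : ℝ) ≤ (1 + u / n) ^ (r - 1) :=
      Real.rpow_le_rpow_of_exponent_le (by linarith) (by linarith)
    rw [Real.rpow_neg_one] at h3
    have h4 : 1 - u / n ≤ (1 + u / n)⁻¹ := by
      rw [← one_div, le_div_iff₀ h0]; nlinarith
    have h5 : ε * (l * u) = u / n := by rw [hε]; field_simp
    rw [h5, hGe]; nlinarith
  have e : l * Real.exp (-(l * u)) - G * Real.exp (-gpg α r n u) =
      -(l * gpd α r n l u) + (l - G) * Real.exp (-gpg α r n u) := by unfold gpd; ring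
  rw [e]
  have hA : |-(l * gpd α r n l u)| ≤ l * (25 * ε / (1 + l * u) ^ 2) := by
    rw [abs_neg, abs_mul, abs_of_pos hl0]; gcongr
  have hB : |(l - G) * Real.exp (-gpg α r n u)| ≤ l * (10 * ε / (1 + l * u) ^ 2) := by
    rw [abs_of_nonneg (mul_nonneg (by linarith) (Real.exp_pos _).le)]
    calc (l - G) * Real.exp (-gpg α r n u) ≤ l * (ε * (l * u)) * (1 / (1 + l * u / 8) ^ 8) := by
          apply mul_le_mul hG2 h2 (Real.exp_pos _).le (by positivity)
      _ ≤ _ := by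
        rw [mul_assoc]
        refine mul_le_mul_of_nonneg_left ?_ hl0.le
        rw [le_div_iff₀ (by positivity), mul_one_div, div_mul_eq_mul_div,
          div_le_iff₀ (by positivity)]
        have h6 := gp_poly _ hx
        have h7 : 1 + l * u ≤ 2 * (1 + l * u / 8) ^ 4 := by
          have := one_add_mul_le_pow (a := l * u / 8) (by linarith) 4
          push_cast at this
          linarith
        have : (l * u * (1 + l * u)) * (1 + l * u) ≤
          (5 * (1 + l * u / 8) ^ 4) * (2 * (1 + l * u / 8) ^ 4) := by gcongr
        nlinarith
  calc _ ≤ _ := abs_add_le _ _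
    _ ≤ l * (25 * ε / (1 + l * u) ^ 2) + l * (10 * ε / (1 + l * u) ^ 2) := add_le_add hA hB
    _ = _ := by ring

lemma gpd_diff (hα : 0 < α) (hr0 : 0 < r) (hr1 : r < 1) (hn : 0 < n)
    (hl : l = α * r * n ^ (r - 1)) (hl0 : 0 < l) (hε : ε = 1 / (l * n)) (hN : 8 ≤ l * n)
    (hu : 0 ≤ u) : |gpd α r n l (u + 1) - gpd α r n l u| ≤ 35 * (ε * l) / (1 + l * u) ^ 2 := by
  have hε0 : 0 < ε := by rw [hε]; positivity
  have := (convex_Icc u (u + 1)).norm_image_sub_le_of_norm_hasDerivWithin_le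
    (f := gpd α r n l) (C := 35 * (ε * l) / (1 + l * u) ^ 2)
    (fun v hv => (gpd_deriv (α := α) (r := r) (l := l) hn (hu.trans hv.1)).hasDerivWithinAt)
    (fun v hv => by
      refine (gpd_deriv_bd hα hr0 hr1 hn hl hl0 hε hN (hu.trans hv.1)).trans ?_
      have := hv.1
      gcongr)
    (Set.left_mem_Icc.2 (by linarith)) (Set.right_mem_Icc.2 (by linarith))
  simpa using this

end


noncomputable def gpQ (α r n : ℝ) (t : ℝ) : ℂ :=
  ∑' k : ℕ, (Real.exp (-gpg α r n k) : ℂ) * Complex.exp ((t : ℂ) * Complex.I) ^ k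

noncomputable def gpQ0 (l : ℝ) (t : ℝ) : ℂ :=
  1 / (1 - (Real.exp (-l) : ℂ) * Complex.exp ((t : ℂ) * Complex.I))

noncomputable def gpW (l : ℝ) (t : ℝ) : ℂ := 1 / ((l : ℂ) - t * Complex.I)

section
variable {α r n l ε : ℝ}

lemma gpd_summable (hα : 0 < α) (hr0 : 0 < r) (hr1 : r < 1) (hn : 0 < n)
    (hl : l = α * r * n ^ (r - 1)) (hl0 : 0 < l) (hl1 : l ≤ 1) (hε : ε = 1 / (l * n))
    (hN : 8 ≤ l * n) : Summable (fun k : ℕ => |gpd α r n l k|) := by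
  have h := ((gp_sum_sq hl0 hl1).1.mul_left (25 * ε / l))
  refine Summable.of_nonneg_of_le (fun _ => abs_nonneg _) (fun k => ?_) h
  refine (gpd_bd hα hr0 hr1 hn hl hl0 hε hN (Nat.cast_nonneg k)).trans (le_of_eq ?_)
  field_simp

lemma gpg_summable (hα : 0 < α) (hr0 : 0 < r) (hr1 : r < 1) (hn : 0 < n)
    (hl : l = α * r * n ^ (r - 1)) (hl0 : 0 < l) (hl1 : l ≤ 1) (hε : ε = 1 / (l * n))
    (hN : 8 ≤ l * n) : Summable (fun k : ℕ => Real.exp (-gpg α r n k)) := by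
  have h := (gpd_summable hα hr0 hr1 hn hl hl0 hl1 hε hN).of_abs
  have h2 : Summable (fun k : ℕ => Real.exp (-l) ^ k) :=
    summable_geometric_of_lt_one (Real.exp_pos _).le (by rw [Real.exp_lt_one_iff]; linarith)
  refine (h.add h2).congr fun k => ?_
  rw [gpd, ← Real.exp_nat_mul, show (k : ℝ) * -l = -(l * k) by ring]
  ring

lemma gpz_norm (t : ℝ) : ‖Complex.exp ((t : ℂ) * Complex.I)‖ = 1 := Complex.norm_exp_ofReal_mul_I t

lemma gpQ_cont (h : Summable (fun k : ℕ => Real.exp (-gpg α r n k))) : Continuous (gpQ α r n) := by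
  unfold gpQ
  refine continuous_tsum (fun k => by fun_prop) h fun k t => ?_
  rw [norm_mul, norm_pow, gpz_norm, one_pow, mul_one, Complex.norm_real, Real.norm_eq_abs,
    abs_of_pos (Real.exp_pos _)]

lemma gpz_periodic (t : ℝ) : Complex.exp (((t + 2 * π : ℝ) : ℂ) * Complex.I) =
    Complex.exp ((t : ℂ) * Complex.I) := by
  rw [show (((t + 2 * π : ℝ) : ℂ) * Complex.I) = (t : ℂ) * Complex.I + 2 * π * Complex.I by
    push_cast; ring, Complex.exp_add, Complex.exp_two_pi_mul_I, mul_one]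

lemma gpQ_periodic : Function.Periodic (gpQ α r n) (2 * π) := by
  intro t; unfold gpQ; simp_rw [gpz_periodic]

lemma gpQ0_periodic : Function.Periodic (gpQ0 l) (2 * π) := by
  intro t; unfold gpQ0; simp_rw [gpz_periodic]

lemma gp_one_sub_z {t : ℝ} (ht : |t| ≤ π) :
    2 * |t| / π ≤ ‖1 - Complex.exp ((t : ℂ) * Complex.I)‖ := by
  rw [norm_sub_rev, mul_comm (t : ℂ), Complex.norm_exp_I_mul_ofReal_sub_one, Real.norm_eq_abs, abs_mul]
  have := Real.mul_abs_le_abs_sin (x := t / 2) (by rw [abs_div, abs_two]; linarith)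
  rw [abs_div, abs_two] at this
  rw [abs_two]
  calc 2 * |t| / π = 2 * (2 / π * (|t| / 2)) := by ring
    _ ≤ _ := by gcongr

lemma gp_one_sub_qz (hl0 : 0 < l) (hl1 : l ≤ 1 / 100) (t : ℝ) :
    0.99 * l ≤ ‖1 - (Real.exp (-l) : ℂ) * Complex.exp ((t : ℂ) * Complex.I)‖ := by
  have h1 : 1 - Real.exp (-l) ≤
      ‖1 - (Real.exp (-l) : ℂ) * Complex.exp ((t : ℂ) * Complex.I)‖ := by
    have := norm_sub_norm_le (1 : ℂ) ((Real.exp (-l) : ℂ) * Complex.exp ((t : ℂ) * Complex.I))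
    rw [norm_one, norm_mul, gpz_norm, mul_one, Complex.norm_real, Real.norm_eq_abs,
      abs_of_pos (Real.exp_pos _)] at this
    exact this
  have h2 : Real.exp (-l) ≤ 1 - l + l ^ 2 := by
    have := Real.abs_exp_sub_one_sub_id_le (x := -l) (by rw [abs_neg, abs_of_pos hl0]; linarith)
    have := (abs_le.1 this).2
    nlinarith
  nlinarith

lemma gp_w_le (hl0 : 0 < l) (hl1 : l ≤ 1 / 100) {t : ℝ} (ht : |t| ≤ π) :
    ‖(l : ℂ) - t * Complex.I‖ ≤
      5 * ‖1 - (Real.exp (-l) : ℂ) * Complex.exp ((t : ℂ) * Complex.I)‖ := by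
  have h1 := gp_one_sub_qz hl0 hl1 t
  have h2 := gp_one_sub_z ht
  set q : ℂ := (Real.exp (-l) : ℂ) with hq
  set z := Complex.exp ((t : ℂ) * Complex.I) with hz
  have hzn : ‖z‖ = 1 := gpz_norm t
  have hw : ‖(l : ℂ) - t * Complex.I‖ ≤ l + |t| := by
    refine (norm_sub_le _ _).trans ?_
    rw [norm_mul, Complex.norm_I, mul_one, Complex.norm_real, Complex.norm_real, Real.norm_eq_abs,
      Real.norm_eq_abs, abs_of_pos hl0]
  have h3 : ‖1 - z‖ ≤ 2 * ‖1 - q * z‖ := by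
    have e : 1 - z = (1 - q * z) + (-((1 - q) * z)) := by ring
    have h4 : ‖(1 - q) * z‖ ≤ ‖1 - q * z‖ := by
      rw [norm_mul, hzn, mul_one, hq]
      have := norm_sub_norm_le (1 : ℂ) (q * z)
      rw [norm_one, norm_mul, hzn, mul_one, hq, Complex.norm_real, Real.norm_eq_abs,
        abs_of_pos (Real.exp_pos _)] at this
      rw [← Complex.ofReal_one, ← Complex.ofReal_sub, Complex.norm_real, Real.norm_eq_abs,
        abs_of_nonneg (by rw [sub_nonneg, Real.exp_le_one_iff]; linarith)]
      simpa [hq] using this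
    rw [e]
    refine (norm_add_le _ _).trans ?_
    rw [norm_neg]; linarith
  have h5 : |t| ≤ π * ‖1 - q * z‖ := by
    have := h2.trans h3
    rw [div_le_iff₀ Real.pi_pos] at this
    linarith
  have := Real.pi_lt_d2
  nlinarith [norm_nonneg (1 - q * z)]

lemma gp_w_pos (hl0 : 0 < l) (t : ℝ) : 0 < ‖(l : ℂ) - t * Complex.I‖ := by
  rw [norm_pos_iff]
  intro h
  have := congrArg Complex.re h
  simp at this
  linarith

lemma gp_qz_ne (hl0 : 0 < l) (hl1 : l ≤ 1 / 100) (t : ℝ) :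
    1 - (Real.exp (-l) : ℂ) * Complex.exp ((t : ℂ) * Complex.I) ≠ 0 := by
  have := gp_one_sub_qz hl0 hl1 t
  rw [← norm_pos_iff]; linarith

lemma gpQ0_cont (hl0 : 0 < l) (hl1 : l ≤ 1 / 100) : Continuous (gpQ0 l) := by
  unfold gpQ0
  exact Continuous.div continuous_const (by fun_prop) (gp_qz_ne hl0 hl1)

lemma gpW_cont (hl0 : 0 < l) : Continuous (gpW l) := by
  unfold gpW
  exact Continuous.div continuous_const (by fun_prop) (fun t => norm_pos_iff.1 (gp_w_pos hl0 t))

lemma gpQ0_le (hl0 : 0 < l) (hl1 : l ≤ 1 / 100) {t : ℝ} (ht : |t| ≤ π) :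
    ‖gpQ0 l t‖ ≤ 5 * ‖gpW l t‖ := by
  unfold gpQ0 gpW
  have h1 := gp_w_le hl0 hl1 ht
  have h2 := gp_w_pos hl0 t
  rw [norm_div, norm_div, norm_one, mul_one_div, div_le_div_iff₀ (by linarith) h2]
  linarith

lemma gpQ0_sub (hl0 : 0 < l) (hl1 : l ≤ 1 / 100) {t : ℝ} (ht : |t| ≤ π) :
    ‖gpQ0 l t - gpW l t‖ ≤ 15 := by
  unfold gpQ0 gpW
  have h1 := gp_w_le hl0 hl1 ht
  have h2 := gp_w_pos hl0 t
  have h3 := gp_qz_ne hl0 hl1 t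
  set w := (l : ℂ) - t * Complex.I with hw
  have e : (Real.exp (-l) : ℂ) * Complex.exp ((t : ℂ) * Complex.I) = Complex.exp (-w) := by
    rw [Complex.ofReal_exp, ← Complex.exp_add]; congr 1; rw [hw]; push_cast; ring
  have h5 : ‖Complex.exp (-w)‖ ≤ 1 := by
    rw [← e, norm_mul, gpz_norm, mul_one, Complex.norm_real, Real.norm_eq_abs,
      abs_of_pos (Real.exp_pos _), Real.exp_le_one_iff]; linarith
  rw [e] at h1 h3 ⊢
  have hwn : w ≠ 0 := norm_pos_iff.1 h2
  have h4 : ‖Complex.exp (-w) - 1 - (-w)‖ ≤ 3 * ‖w‖ ^ 2 := by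
    rcases le_total ‖w‖ 1 with h | h
    · have := Complex.norm_exp_sub_one_sub_id_le (x := -w) (by rwa [norm_neg])
      rw [norm_neg] at this
      nlinarith [sq_nonneg ‖w‖]
    · calc ‖Complex.exp (-w) - 1 - (-w)‖ ≤ ‖Complex.exp (-w)‖ + ‖(1 : ℂ)‖ + ‖-w‖ :=
          (norm_sub_le _ _).trans (by gcongr; exact norm_sub_le _ _)
        _ ≤ _ := by rw [norm_one, norm_neg]; nlinarith
  have e2 : 1 / (1 - Complex.exp (-w)) - 1 / w =
      (Complex.exp (-w) - 1 - (-w)) / ((1 - Complex.exp (-w)) * w) := by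
    field_simp; ring
  rw [e2, norm_div, norm_mul, div_le_iff₀ (mul_pos (norm_pos_iff.2 h3) h2)]
  nlinarith

lemma gpQ0_shift (hl0 : 0 < l) (hl1 : l ≤ 1 / 100) (t h : ℝ) :
    ‖gpQ0 l (t + h) - gpQ0 l t‖ ≤ |h| / (0.99 * l) * ‖gpQ0 l t‖ := by
  have h1 := gp_one_sub_qz hl0 hl1 (t + h)
  have h2 := gp_qz_ne hl0 hl1 (t + h)
  have h3 := gp_qz_ne hl0 hl1 t
  have e : Complex.exp (((t + h : ℝ) : ℂ) * Complex.I) =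
    Complex.exp ((t : ℂ) * Complex.I) * Complex.exp ((h : ℂ) * Complex.I) := by
    rw [← Complex.exp_add]; push_cast; ring_nf
  unfold gpQ0
  have h4 : ‖Complex.exp ((h : ℂ) * Complex.I) - 1‖ ≤ |h| := by
    have := Real.norm_exp_I_mul_ofReal_sub_one_le (x := h)
    rwa [mul_comm, Real.norm_eq_abs] at this
  set q : ℂ := (Real.exp (-l) : ℂ) with hq
  have hqn : ‖q‖ ≤ 1 := by
    rw [hq, Complex.norm_real, Real.norm_eq_abs,
      abs_of_pos (Real.exp_pos _), Real.exp_le_one_iff]; linarith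
  have hzn := gpz_norm t
  set z' := Complex.exp (((t + h : ℝ) : ℂ) * Complex.I)
  set z := Complex.exp ((t : ℂ) * Complex.I) with hz
  have e2 : 1 / (1 - q * z') - 1 / (1 - q * z) =
      (q * z * (Complex.exp ((h : ℂ) * Complex.I) - 1)) / (1 - q * z') * (1 / (1 - q * z)) := by
    field_simp
    rw [e]; ring
  rw [e2, norm_mul]
  refine mul_le_mul_of_nonneg_right ?_ (norm_nonneg _)
  rw [norm_div]
  refine div_le_div₀ (abs_nonneg _) ?_ (by positivity) h1
  rw [norm_mul, norm_mul, hzn, mul_one]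
  calc _ ≤ 1 * |h| := by gcongr
    _ = _ := one_mul _

lemma gpQ_sub (hα : 0 < α) (hr0 : 0 < r) (hr1 : r < 1) (hn : 0 < n)
    (hl : l = α * r * n ^ (r - 1)) (hl0 : 0 < l) (hl1 : l ≤ 1 / 100) (hε : ε = 1 / (l * n))
    (hN : 8 ≤ l * n) {t : ℝ} (ht : |t| ≤ π) :
    ‖gpQ α r n t - gpQ0 l t‖ ≤ 160 * ε * ‖gpW l t‖ := by
  have hl1' : l ≤ 1 := by linarith
  have hε0 : 0 < ε := by rw [hε]; positivity
  have hds := gpd_summable hα hr0 hr1 hn hl hl0 hl1' hε hN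
  have hgs := gpg_summable hα hr0 hr1 hn hl hl0 hl1' hε hN
  obtain ⟨hs1, hs2⟩ := gp_sum_sq hl0 hl1'
  have hz1 := gp_one_sub_z ht
  have hzn := gpz_norm t
  unfold gpQ gpQ0
  set z := Complex.exp ((t : ℂ) * Complex.I) with hz
  have hgeo : HasSum (fun k : ℕ => ((Real.exp (-l) : ℂ) * z) ^ k)
      (1 / (1 - (Real.exp (-l) : ℂ) * z)) := by
    rw [one_div]
    apply hasSum_geometric_of_norm_lt_one
    rw [norm_mul, hzn, mul_one, Complex.norm_real, Real.norm_eq_abs,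
      abs_of_pos (Real.exp_pos _), Real.exp_lt_one_iff]; linarith
  have hgs' : Summable (fun k : ℕ => (Real.exp (-gpg α r n k) : ℂ) * z ^ k) := by
    refine Summable.of_norm (hgs.congr fun k => ?_)
    rw [norm_mul, norm_pow, hzn, one_pow, mul_one, Complex.norm_real, Real.norm_eq_abs,
      abs_of_pos (Real.exp_pos _)]
  have hdn : ∀ k : ℕ, ‖(gpd α r n l k : ℂ) * z ^ k‖ = |gpd α r n l k| := fun k => by
    rw [norm_mul, norm_pow, hzn, one_pow, mul_one, Complex.norm_real, Real.norm_eq_abs]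
  have hds' : Summable (fun k : ℕ => (gpd α r n l k : ℂ) * z ^ k) := by
    refine Summable.of_norm (hds.congr fun k => (hdn k).symm)
  have e1 : (∑' k : ℕ, (Real.exp (-gpg α r n k) : ℂ) * z ^ k) - 1 / (1 - (Real.exp (-l) : ℂ) * z) =
      ∑' k : ℕ, (gpd α r n l k : ℂ) * z ^ k := by
    rw [← hgeo.tsum_eq, ← hgs'.tsum_sub hgeo.summable]
    refine tsum_congr fun k => ?_
    rw [gpd, mul_pow, ← Complex.ofReal_pow, ← Real.exp_nat_mul, show (k : ℝ) * -l = -(l * k) by ring]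
    push_cast; ring
  rw [e1]
  set S := ∑' k : ℕ, (gpd α r n l k : ℂ) * z ^ k with hS
  have hA : l * ‖S‖ ≤ 50 * ε := by
    have h1 : ‖S‖ ≤ ∑' k : ℕ, 25 * ε / l * (l / (1 + l * k) ^ 2) := by
      refine tsum_of_norm_bounded (hs1.mul_left _).hasSum fun k => ?_
      rw [hdn]
      refine (gpd_bd hα hr0 hr1 hn hl hl0 hε hN (Nat.cast_nonneg k)).trans (le_of_eq ?_)
      field_simp
    rw [tsum_mul_left] at h1
    calc l * ‖S‖ ≤ l * (25 * ε / l * 2) := by gcongr; exact h1.trans (by gcongr)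
      _ = _ := by field_simp; ring
  have hB : ‖1 - z‖ * ‖S‖ ≤ 70 * ε := by
    have e2 : (1 - z) * S = ∑' k : ℕ, ((gpd α r n l (k + 1) - gpd α r n l k : ℝ) : ℂ) * z ^ (k + 1) := by
      have h1 := hds'.tsum_eq_zero_add
      have h0 : gpd α r n l ((0 : ℕ) : ℝ) = 0 := by simp [gpd, gpg_zero]
      rw [h0, Complex.ofReal_zero, zero_mul, zero_add] at h1
      have h2 := (summable_nat_add_iff 1).2 hds'
      have h3 : z * S = ∑' k : ℕ, z * ((gpd α r n l k : ℂ) * z ^ k) := by rw [tsum_mul_left]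
      rw [sub_mul, one_mul, h3, hS, h1, ← h2.tsum_sub (hds'.mul_left z)]
      refine tsum_congr fun k => ?_
      push_cast; ring
    rw [← norm_mul, e2]
    have h1 : ‖∑' k : ℕ, ((gpd α r n l (k + 1) - gpd α r n l k : ℝ) : ℂ) * z ^ (k + 1)‖ ≤
        ∑' k : ℕ, 35 * ε * (l / (1 + l * k) ^ 2) := by
      refine tsum_of_norm_bounded (hs1.mul_left _).hasSum fun k => ?_
      rw [norm_mul, norm_pow, hzn, one_pow, mul_one, Complex.norm_real, Real.norm_eq_abs]
      refine (gpd_diff hα hr0 hr1 hn hl hl0 hε hN (Nat.cast_nonneg k)).trans (le_of_eq ?_)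
      ring
    rw [tsum_mul_left] at h1
    refine h1.trans ?_
    nlinarith
  have hw : ‖(l : ℂ) - t * Complex.I‖ ≤ l + |t| := by
    refine (norm_sub_le _ _).trans ?_
    rw [norm_mul, Complex.norm_I, mul_one, Complex.norm_real, Complex.norm_real, Real.norm_eq_abs,
      Real.norm_eq_abs, abs_of_pos hl0]
  have hC : |t| * ‖S‖ ≤ 110 * ε := by
    have h1 : 2 * |t| / π * ‖S‖ ≤ 70 * ε := le_trans (by gcongr) hB
    have h2 : |t| * ‖S‖ = π / 2 * (2 * |t| / π * ‖S‖) := by field_simp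
    rw [h2]
    have := Real.pi_lt_d4
    calc _ ≤ 3.142 / 2 * (70 * ε) := by
            refine mul_le_mul ?_ h1 (by positivity) (by norm_num); linarith
      _ ≤ _ := by linarith
  have hwp := gp_w_pos hl0 t
  rw [gpW, norm_div, norm_one, mul_one_div, le_div_iff₀ hwp]
  nlinarith [norm_nonneg S]

lemma gp_kappa {s : ℝ} (hs : 1 < s) : 0 ≤ cosNormR s / (2 * π) ^ (1 / s) ∧
    cosNormR s / (2 * π) ^ (1 / s) ≤ 1 := by
  have hpi := Real.pi_pos
  have hc : Continuous fun t => |Real.cos t| ^ s :=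
    Continuous.rpow_const (by fun_prop) fun _ => Or.inr (by linarith)
  have h0 : 0 ≤ ∫ t in (0 : ℝ)..(2 * π), |Real.cos t| ^ s :=
    intervalIntegral.integral_nonneg (by linarith) fun t _ => Real.rpow_nonneg (abs_nonneg _) _
  have h1 : ∫ t in (0 : ℝ)..(2 * π), |Real.cos t| ^ s ≤ 2 * π := by
    calc _ ≤ ∫ t in (0 : ℝ)..(2 * π), (1 : ℝ) := by
          refine intervalIntegral.integral_mono_on (by linarith) (hc.intervalIntegrable _ _)
            (by simp) fun t _ => Real.rpow_le_one (abs_nonneg _) (Real.abs_cos_le_one _) (by linarith)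
      _ = _ := by simp
  unfold cosNormR
  constructor
  · positivity
  · rw [div_le_one (by positivity)]
    exact Real.rpow_le_rpow h0 h1 (by positivity)

/-- main estimates -/
lemma gp_mainD {m : ℕ} {s c : ℝ} (hs : 1 < s) (hα : 0 < α) (hr0 : 0 < r) (hr1 : r < 1) (hm : 0 < m)
    (hl : l = α * r * (m : ℝ) ^ (r - 1)) (hl0 : 0 < l) (hl1 : l ≤ 1 / 100) (hε : ε = 1 / (l * m))
    (hN : 8 ≤ l * m) :
    (∀ h, |h| ≤ π / m → gpN s (fun t => gpQ α r m (t + h) - gpQ α r m t) ≤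
      340 * ε * gpN s (gpW l)) ∧
    |gpN s (gpR m c (gpQ α r m)) - cosNormR s / (2 * π) ^ (1 / s) * gpN s (gpW l)| ≤
      500 * ε * gpN s (gpW l) + 95 := by
  have hpi := Real.pi_pos
  have hm' : (0 : ℝ) < m := by exact_mod_cast hm
  have hε0 : 0 < ε := by rw [hε]; positivity
  have hQc := gpQ_cont (gpg_summable hα hr0 hr1 hm' hl hl0 (by linarith) hε hN)
  have hQ0c := gpQ0_cont hl0 hl1
  have hWc := gpW_cont hl0
  have hD : gpN s (fun t => gpQ α r m t - gpQ0 l t) ≤ 160 * ε * gpN s (gpW l) :=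
    gpN_le_mul hs (by positivity) (hQc.sub hQ0c) hWc fun t ht =>
      gpQ_sub hα hr0 hr1 hm' hl hl0 hl1 hε hN (abs_le.2 ht)
  have hN0 := gpN_nonneg s (gpW l)
  have hsh : ∀ h, |h| ≤ π / m → gpN s (fun t => gpQ α r m (t + h) - gpQ α r m t) ≤
      340 * ε * gpN s (gpW l) := by
    intro h hh
    have h1 : gpN s (fun t => gpQ0 l (t + h) - gpQ0 l t) ≤ 20 * ε * gpN s (gpW l) := by
      refine gpN_le_mul hs (by positivity) ((hQ0c.comp (by fun_prop)).sub hQ0c) hWc fun t ht => ?_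
      refine (gpQ0_shift hl0 hl1 t h).trans ?_
      have h2 := gpQ0_le hl0 hl1 (abs_le.2 ht)
      have h3 : |h| / (0.99 * l) ≤ 4 * ε := by
        rw [div_le_iff₀ (by positivity)]
        refine hh.trans ?_
        rw [hε, div_le_iff₀ hm']
        have : 4 * (1 / (l * m)) * (0.99 * l) * (m : ℝ) = 3.96 := by field_simp; norm_num
        rw [this]
        linarith [Real.pi_lt_d2]
      calc _ ≤ 4 * ε * (5 * ‖gpW l t‖) := by gcongr
        _ = _ := by ring
    have e : (fun t => gpQ α r m (t + h) - gpQ α r m t) = fun t =>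
        ((gpQ α r m (t + h) - gpQ0 l (t + h)) - (gpQ α r m t - gpQ0 l t)) +
          (gpQ0 l (t + h) - gpQ0 l t) := by ext t; ring
    rw [e]
    have hc1 : Continuous fun t => gpQ α r m (t + h) - gpQ0 l (t + h) :=
      (hQc.sub hQ0c).comp (by fun_prop : Continuous fun t : ℝ => t + h)
    have h4 := gpN_add_le hs (hc1.sub (hQc.sub hQ0c))
      ((hQ0c.comp (by fun_prop : Continuous fun t : ℝ => t + h)).sub hQ0c)
    have h5 := gpN_sub_le hs hc1 (hQc.sub hQ0c)
    have h6 := gpN_shift (s := s) (F := fun t => gpQ α r m t - gpQ0 l t)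
      (fun t => by rw [gpQ_periodic t, gpQ0_periodic t]) h
    have h7 := h4.trans (add_le_add_left h5 _)
    simp only [h6, Function.comp_def] at h7
    refine h7.trans ?_
    have h8 : gpN s (gpQ α r m - gpQ0 l) ≤ 160 * ε * gpN s (gpW l) := hD
    have h9 : gpN s ((fun x => gpQ0 l (x + h)) - gpQ0 l) ≤ 20 * ε * gpN s (gpW l) := h1
    linarith
  refine ⟨hsh, ?_⟩
  have h1 := gp_avg hs hQc gpQ_periodic hm c _ hsh
  have h2 := gpN_abs_sub hs hQc hQ0c
  have h3 := gpN_abs_sub hs hQ0c hWc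
  have h4 : gpN s (fun t => gpQ0 l t - gpW l t) ≤ 95 := by
    have := gpN_mono (G := fun _ : ℝ => (15 : ℝ)) hs (hQ0c.sub hWc) continuous_const fun t ht => by
      rw [Real.norm_of_nonneg (by norm_num : (0 : ℝ) ≤ 15)]
      exact gpQ0_sub hl0 hl1 (abs_le.2 ht)
    refine this.trans ?_
    rw [gpN_const hs, Real.norm_of_nonneg (by norm_num : (0 : ℝ) ≤ 15)]
    have : (2 * π) ^ (1 / s) ≤ 2 * π := by
      conv_rhs => rw [← Real.rpow_one (2 * π)]
      refine Real.rpow_le_rpow_of_exponent_le (by linarith [Real.pi_gt_three]) ?_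
      rw [div_le_one (by linarith)]; linarith
    nlinarith [Real.pi_lt_d4]
  obtain ⟨k0, k1⟩ := gp_kappa hs
  set κ := cosNormR s / (2 * π) ^ (1 / s)
  have h5 : |κ * gpN s (gpQ α r m) - κ * gpN s (gpW l)| ≤ 160 * ε * gpN s (gpW l) + 95 := by
    rw [← mul_sub, abs_mul, abs_of_nonneg k0]
    have h6 : |gpN s (gpQ α r m) - gpN s (gpW l)| ≤ 160 * ε * gpN s (gpW l) + 95 := by
      refine (abs_sub_le _ (gpN s (gpQ0 l)) _).trans ?_
      linarith
    calc _ ≤ 1 * |gpN s (gpQ α r m) - gpN s (gpW l)| := by gcongr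
      _ ≤ _ := by rw [one_mul]; exact h6
  refine (abs_sub_le _ (κ * gpN s (gpQ α r m)) _).trans ?_
  linarith

end


noncomputable def gpI (s : ℝ) : ℝ := ∫ t in Set.Ioi (0 : ℝ), ((t ^ 2 + 1) ^ (s / 2))⁻¹

section
variable {l s p : ℝ}

lemma gpI_intble (hs : 1 < s) : Integrable (fun t : ℝ => ((t ^ 2 + 1) ^ (s / 2))⁻¹) := by
  have := integrable_rpow_neg_one_add_norm_sq (E := ℝ) (μ := volume) (r := s) (by simpa using hs)
  refine this.congr (Eventually.of_forall fun t => ?_)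
  simp only [Real.norm_eq_abs, sq_abs]
  rw [add_comm, show -s / 2 = -(s / 2) by ring, Real.rpow_neg (by positivity)]

lemma gp_tail (hs : 1 < s) {a c : ℝ} (ha : 0 < a) :
    ∫ t in Set.Ioi a, ((t ^ 2 + c ^ 2) ^ (s / 2))⁻¹ ≤ a ^ (1 - s) / (s - 1) := by
  have h1 := integral_Ioi_rpow_of_lt (a := -s) (by linarith) ha
  have e : a ^ (1 - s) / (s - 1) = -a ^ (-s + 1) / (-s + 1) := by
    rw [show -s + 1 = -(s - 1) by ring, neg_div_neg_eq, show 1 - s = -(s - 1) by ring]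
  rw [e, ← h1]
  refine integral_mono_of_nonneg (Eventually.of_forall fun t => by positivity)
    (integrableOn_Ioi_rpow_of_lt (by linarith) ha) ?_
  filter_upwards [ae_restrict_mem measurableSet_Ioi] with t ht
  have ht0 : 0 < t := ha.trans ht
  rw [Real.rpow_neg ht0.le]
  have : t ^ s = (t ^ 2) ^ (s / 2) := by
    rw [← Real.rpow_natCast t 2, ← Real.rpow_mul ht0.le]; congr 1; push_cast; ring
  rw [this]
  gcongr
  linarith [sq_nonneg c]

lemma gpI_le (hs : 1 < s) : gpI s ≤ s / (s - 1) := by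
  have h := gpI_intble hs
  unfold gpI
  rw [← Set.Ioc_union_Ioi_eq_Ioi (zero_le_one' ℝ), setIntegral_union (Set.Ioc_disjoint_Ioi le_rfl)
    measurableSet_Ioi h.integrableOn h.integrableOn]
  have h1 := gp_tail hs (c := 1) one_pos
  have h2 : ∫ t in Set.Ioc (0 : ℝ) 1, ((t ^ 2 + 1) ^ (s / 2))⁻¹ ≤ ∫ t in Set.Ioc (0 : ℝ) 1, (1 : ℝ) := by
    refine setIntegral_mono h.integrableOn (by simp) fun t => ?_
    apply inv_le_one_of_one_le₀
    exact Real.one_le_rpow (by linarith [sq_nonneg t]) (by linarith)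
  simp only [one_pow, Real.one_rpow] at h1
  simp at h2
  have : s / (s - 1) = 1 + 1 / (s - 1) := by field_simp [show s - 1 ≠ 0 by linarith]; ring
  linarith

lemma gpI_ge (hs : 1 < s) (hs2 : s ≤ 2) : π / 2 ≤ gpI s := by
  have h := integral_Ioi_inv_one_add_sq (i := 0)
  rw [Real.arctan_zero, sub_zero] at h
  rw [← h]
  refine setIntegral_mono (integrable_inv_one_add_sq).integrableOn (gpI_intble hs).integrableOn fun t => ?_
  dsimp
  rw [add_comm]
  gcongr
  conv_rhs => rw [← Real.rpow_one (t ^ 2 + 1)]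
  exact Real.rpow_le_rpow_of_exponent_le (by linarith [sq_nonneg t]) (by linarith)

lemma gpW_norm (hl0 : 0 < l) (t : ℝ) : ‖gpW l t‖ ^ s = ((t ^ 2 + l ^ 2) ^ (s / 2))⁻¹ := by
  unfold gpW
  have : ‖(l : ℂ) - t * Complex.I‖ = √(t ^ 2 + l ^ 2) := by
    have := Complex.norm_add_mul_I l (-t)
    rw [show (l : ℂ) + ((-t : ℝ) : ℂ) * Complex.I = (l : ℂ) - t * Complex.I by push_cast; ring] at this
    rw [this]; congr 1; ring
  rw [norm_div, norm_one, this, one_div, Real.inv_rpow (Real.sqrt_nonneg _), Real.sqrt_eq_rpow,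
    ← Real.rpow_mul (by positivity)]
  congr 2; ring

lemma gpW_scale (hl0 : 0 < l) (t : ℝ) :
    ((t ^ 2 + l ^ 2) ^ (s / 2))⁻¹ = l ^ (-s) * (((l⁻¹ * t) ^ 2 + 1) ^ (s / 2))⁻¹ := by
  have : t ^ 2 + l ^ 2 = l ^ 2 * ((l⁻¹ * t) ^ 2 + 1) := by field_simp
  rw [this, Real.mul_rpow (by positivity) (by positivity), mul_inv, Real.rpow_neg hl0.le]
  congr 2
  rw [← Real.rpow_natCast l 2, ← Real.rpow_mul hl0.le]; congr 1; push_cast; ring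

lemma gpW_int (hs : 1 < s) (hl0 : 0 < l) :
    gpN s (gpW l) ^ s + 2 * ∫ t in Set.Ioi π, ((t ^ 2 + l ^ 2) ^ (s / 2))⁻¹ = 2 * (l ^ (1 - s) * gpI s) := by
  have hi : Integrable (fun t : ℝ => ((t ^ 2 + l ^ 2) ^ (s / 2))⁻¹) := by
    simp_rw [gpW_scale hl0]
    exact ((gpI_intble hs).comp_mul_left' (inv_ne_zero hl0.ne')).const_mul _
  have h1 : ∫ t in Set.Ioi (0 : ℝ), ((t ^ 2 + l ^ 2) ^ (s / 2))⁻¹ = l ^ (1 - s) * gpI s := by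
    simp_rw [gpW_scale hl0]
    rw [integral_const_mul, integral_comp_mul_left_Ioi (fun t => ((t ^ 2 + 1) ^ (s / 2))⁻¹) 0
      (inv_pos.2 hl0), mul_zero, inv_inv, smul_eq_mul, ← mul_assoc, gpI]
    congr 1
    rw [show 1 - s = -s + 1 by ring, Real.rpow_add_one hl0.ne']
  rw [gpN_pow hs]
  simp_rw [gpW_norm hl0]
  rw [← h1]
  have h2 : ∫ t in Set.Ioi (0 : ℝ), ((t ^ 2 + l ^ 2) ^ (s / 2))⁻¹ =
      (∫ t in (0 : ℝ)..π, ((t ^ 2 + l ^ 2) ^ (s / 2))⁻¹) +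
      ∫ t in Set.Ioi π, ((t ^ 2 + l ^ 2) ^ (s / 2))⁻¹ := by
    rw [intervalIntegral.integral_of_le Real.pi_pos.le, ← setIntegral_union
      (Set.Ioc_disjoint_Ioi le_rfl) measurableSet_Ioi hi.integrableOn hi.integrableOn,
      Set.Ioc_union_Ioi_eq_Ioi Real.pi_pos.le]
  have h3 : ∫ t in (-π)..π, ((t ^ 2 + l ^ 2) ^ (s / 2))⁻¹ =
      2 * ∫ t in (0 : ℝ)..π, ((t ^ 2 + l ^ 2) ^ (s / 2))⁻¹ := by
    rw [← intervalIntegral.integral_add_adjacent_intervals (b := 0) hi.intervalIntegrable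
      hi.intervalIntegrable]
    have := intervalIntegral.integral_comp_neg (a := 0) (b := π)
      (fun t => ((t ^ 2 + l ^ 2) ^ (s / 2))⁻¹)
    simp only [neg_sq, neg_zero] at this
    rw [← this]; ring
  rw [h3, h2]; ring

lemma gp_mainE (hs : 1 < s) (hp : 1 < p) (hps : 1 / p + 1 / s = 1) (hl0 : 0 < l) :
    gpN s (gpW l) ≤ 2 * l ^ (-(1 / p)) * p ^ (1 / s) ∧
    |gpN s (gpW l) - l ^ (-(1 / p)) * (2 * gpI s) ^ (1 / s)| ≤
      2 * (1 / (s - 1) * l ^ ((s - 1) / p)) + 1 := by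
  have hpi := Real.pi_pos
  have hs0 : 0 < s := by linarith
  have hps' : p = s / (s - 1) := by
    have : s - 1 ≠ 0 := by linarith
    field_simp at hps ⊢; linarith
  have h1p : 1 / p = 1 - 1 / s := by linarith
  have hI0 : 0 ≤ gpI s := setIntegral_nonneg measurableSet_Ioi fun t _ => by positivity
  have hIp : gpI s ≤ p := by rw [hps']; exact gpI_le hs
  have hint := gpW_int hs hl0
  have htail := gp_tail hs (c := l) hpi
  have hB0 : 0 ≤ ∫ t in Set.Ioi π, ((t ^ 2 + l ^ 2) ^ (s / 2))⁻¹ :=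
    setIntegral_nonneg measurableSet_Ioi fun t _ => by positivity
  set B := 2 * ∫ t in Set.Ioi π, ((t ^ 2 + l ^ 2) ^ (s / 2))⁻¹ with hB
  have hB0 : 0 ≤ B := by positivity
  set A := 2 * (l ^ (1 - s) * gpI s) with hA
  set N := gpN s (gpW l) with hNdef
  have hN0 : 0 ≤ N := gpN_nonneg _ _
  have hA0 : 0 ≤ A := by positivity
  have hNs : (N ^ s) ^ (1 / s) = N := by
    rw [← Real.rpow_mul hN0, mul_one_div_cancel hs0.ne', Real.rpow_one]
  have hAs : A ^ (1 / s) = l ^ (-(1 / p)) * (2 * gpI s) ^ (1 / s) := by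
    rw [hA, show 2 * (l ^ (1 - s) * gpI s) = l ^ (1 - s) * (2 * gpI s) by ring,
      Real.mul_rpow (by positivity) (by positivity), ← Real.rpow_mul hl0.le]
    congr 2; rw [h1p]; field_simp; ring
  have hNA : N ≤ A ^ (1 / s) := by
    rw [← hNs]; exact Real.rpow_le_rpow (by positivity) (by linarith) (by positivity)
  rw [← hAs]
  constructor
  · refine hNA.trans ?_
    rw [hAs, Real.mul_rpow (by norm_num) hI0]
    have h2 : (2 : ℝ) ^ (1 / s) ≤ 2 := by
      conv_rhs => rw [← Real.rpow_one 2]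
      refine Real.rpow_le_rpow_of_exponent_le (by norm_num) ?_
      rw [div_le_one hs0]; exact hs.le
    calc _ ≤ l ^ (-(1 / p)) * (2 * p ^ (1 / s)) := by gcongr
      _ = _ := by ring
  · rw [abs_sub_comm, abs_of_nonneg (by linarith)]
    have hT : 0 ≤ 1 / (s - 1) * l ^ ((s - 1) / p) :=
      mul_nonneg (one_div_nonneg.2 (by linarith)) (by positivity)
    have hπs : π ^ (1 - s) ≤ 1 := Real.rpow_le_one_of_one_le_of_nonpos (by linarith [Real.pi_gt_three]) (by linarith)
    rcases le_total 2 s with h2 | h2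
    · have hB1 : B ≤ 1 := by
        have : π ^ (1 - s) ≤ 1 / 2 := by
          calc π ^ (1 - s) ≤ π ^ (-1 : ℝ) :=
                Real.rpow_le_rpow_of_exponent_le (by linarith [Real.pi_gt_three]) (by linarith)
            _ = π⁻¹ := Real.rpow_neg_one _
            _ ≤ 1 / 2 := by rw [one_div]; gcongr; linarith [Real.pi_gt_three]
        have h3 : π ^ (1 - s) / (s - 1) ≤ 1 / 2 / 1 := by
          gcongr
          linarith
        linarith
      have h4 := Real.rpow_add_le_add_rpow (p := 1 / s) (Real.rpow_nonneg hN0 s) hB0 (by positivity)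
        (by rw [div_le_one hs0]; exact hs.le)
      rw [hNs, hint] at h4
      have h5 : B ^ (1 / s) ≤ 1 := Real.rpow_le_one hB0 hB1 (by positivity)
      linarith
    · have hI := gpI_ge hs h2
      have hIp' : 0 < gpI s := by linarith
      have hAp : 0 < A := by positivity
      have hs1 : 0 < s - 1 := by linarith
      have hB1 : B ≤ 2 / (s - 1) := by
        have : π ^ (1 - s) / (s - 1) ≤ 1 / (s - 1) := by gcongr
        calc B ≤ 2 * (1 / (s - 1)) := by rw [hB]; linarith
          _ = _ := by ring
      have h3 : A ^ (1 / s) * (1 - B / A) ≤ N := by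
        have hx : 0 ≤ 1 - B / A := by
          rw [sub_nonneg, div_le_one hAp]
          have : 0 ≤ N ^ s := by positivity
          linarith
        have e : N ^ s = A * (1 - B / A) := by field_simp; linarith
        rw [← hNs, e, Real.mul_rpow hA0 hx]
        gcongr
        conv_lhs => rw [← Real.rpow_one (1 - B / A)]
        apply Real.rpow_le_rpow_of_exponent_ge' hx (by linarith [div_nonneg hB0 hA0]) (by positivity)
        rw [div_le_one hs0]; exact hs.le
      have h4 : A ^ (1 / s) * (B / A) = A ^ (-(1 / p)) * B := by
        rw [show -(1 / p) = 1 / s - 1 by rw [h1p]; ring, Real.rpow_sub_one hAp.ne']; ring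
      have h5 : A ^ (-(1 / p)) ≤ l ^ ((s - 1) / p) := by
        have : l ^ (1 - s) ≤ A := by
          rw [hA]
          have : 0 < l ^ (1 - s) := by positivity
          nlinarith [Real.pi_gt_three]
        calc A ^ (-(1 / p)) ≤ (l ^ (1 - s)) ^ (-(1 / p)) :=
              Real.rpow_le_rpow_of_nonpos (by positivity) this (by
                rw [neg_nonpos]; positivity)
          _ = _ := by rw [← Real.rpow_mul hl0.le]; congr 1; ring
      have h6 : A ^ (-(1 / p)) * B ≤ l ^ ((s - 1) / p) * (2 / (s - 1)) := by gcongr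
      have e : 2 * (1 / (s - 1) * l ^ ((s - 1) / p)) = l ^ ((s - 1) / p) * (2 / (s - 1)) := by ring
      rw [e]
      nlinarith
end


lemma gp_int_cos (j : ℤ) (θ : ℝ) :
    ∫ t in (-π)..π, Real.cos (j * t + θ) = if j = 0 then 2 * π * Real.cos θ else 0 := by
  split_ifs with h
  · subst h
    simp only [Int.cast_zero, zero_mul, zero_add, intervalIntegral.integral_const, smul_eq_mul]
    ring
  · have hj : (j : ℝ) ≠ 0 := by exact_mod_cast h
    rw [intervalIntegral.integral_comp_mul_add (fun t => Real.cos t) hj, integral_cos, smul_eq_mul]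
    have : Real.sin (j * π + θ) - Real.sin (j * -π + θ) = 0 := by
      rw [show (j : ℝ) * π + θ = (j * -π + θ) + j * (2 * π) by ring,
        Real.sin_add_int_mul_two_pi, sub_self]
    rw [this, mul_zero]

lemma gp_orth (k j : ℕ) :
    (∫ t in (-π)..π, Real.cos (((k : ℝ) + 1) * t) * Real.cos (j * t) = if k + 1 = j then π else 0) ∧
    (∫ t in (-π)..π, Real.sin (((k : ℝ) + 1) * t) * Real.cos (j * t) = 0) ∧
    (∫ t in (-π)..π, Real.cos (((k : ℝ) + 1) * t) * Real.sin (j * t) = 0) ∧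
    (∫ t in (-π)..π, Real.sin (((k : ℝ) + 1) * t) * Real.sin (j * t) = if k + 1 = j then π else 0) := by
  have hA := fun θ => gp_int_cos ((k : ℤ) + 1 - j) θ
  have hB := fun θ => gp_int_cos ((k : ℤ) + 1 + j) θ
  have hB0 : ((k : ℤ) + 1 + j) ≠ 0 := by omega
  simp only [hB0, if_false] at hB
  push_cast at hA hB
  have hA0 : ((k : ℤ) + 1 - j) = 0 ↔ k + 1 = j := by omega
  simp only [hA0] at hA
  have ii : ∀ c θ : ℝ, IntervalIntegrable (fun t => Real.cos (c * t + θ)) volume (-π) π :=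
    fun c θ => (by fun_prop : Continuous fun t => Real.cos (c * t + θ)).intervalIntegrable _ _
  have hsin : ∀ x, Real.sin x = Real.cos (x + -(π / 2)) := fun x => by
    rw [← sub_eq_add_neg, Real.cos_sub_pi_div_two]
  refine ⟨?_, ?_, ?_, ?_⟩
  · have e : ∀ t, Real.cos (((k : ℝ) + 1) * t) * Real.cos (j * t) =
        (1 / 2) * (Real.cos (((k : ℝ) + 1 - j) * t + 0) + Real.cos (((k : ℝ) + 1 + j) * t + 0)) := by
      intro t
      rw [add_zero, add_zero, sub_mul, add_mul _ (j : ℝ), Real.cos_sub, Real.cos_add]; ring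
    simp_rw [e]
    rw [intervalIntegral.integral_const_mul, intervalIntegral.integral_add (ii _ _) (ii _ _), hA, hB]
    split_ifs <;> simp
  · have e : ∀ t, Real.sin (((k : ℝ) + 1) * t) * Real.cos (j * t) =
        (1 / 2) * (Real.cos (((k : ℝ) + 1 - j) * t + -(π / 2)) + Real.cos (((k : ℝ) + 1 + j) * t + -(π / 2))) := by
      intro t
      rw [← hsin, ← hsin, sub_mul, add_mul _ (j : ℝ), Real.sin_sub, Real.sin_add]; ring
    simp_rw [e]
    rw [intervalIntegral.integral_const_mul, intervalIntegral.integral_add (ii _ _) (ii _ _), hA, hB]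
    split_ifs <;> simp
  · have e : ∀ t, Real.cos (((k : ℝ) + 1) * t) * Real.sin (j * t) =
        (1 / 2) * (Real.cos (((k : ℝ) + 1 + j) * t + -(π / 2)) - Real.cos (((k : ℝ) + 1 - j) * t + -(π / 2))) := by
      intro t
      rw [← hsin, ← hsin, sub_mul, add_mul _ (j : ℝ), Real.sin_sub, Real.sin_add]; ring
    simp_rw [e]
    rw [intervalIntegral.integral_const_mul, intervalIntegral.integral_sub (ii _ _) (ii _ _), hA, hB]
    split_ifs <;> simp
  · have e : ∀ t, Real.sin (((k : ℝ) + 1) * t) * Real.sin (j * t) =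
        (1 / 2) * (Real.cos (((k : ℝ) + 1 - j) * t + 0) - Real.cos (((k : ℝ) + 1 + j) * t + 0)) := by
      intro t
      rw [add_zero, add_zero, sub_mul, add_mul _ (j : ℝ), Real.cos_sub, Real.cos_add]; ring
    simp_rw [e]
    rw [intervalIntegral.integral_const_mul, intervalIntegral.integral_sub (ii _ _) (ii _ _), hA, hB]
    split_ifs <;> simp

lemma gp_trig_int {u v : ℕ → ℝ} (hu : Summable fun k => |u k|) (hv : Summable fun k => |v k|)
    (w : ℝ → ℝ) (hw : Continuous w) (hw1 : ∀ t, |w t| ≤ 1) :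
    HasSum (fun k => u k * (∫ t in (-π)..π, Real.cos (((k : ℝ) + 1) * t) * w t) +
      v k * ∫ t in (-π)..π, Real.sin (((k : ℝ) + 1) * t) * w t)
      (∫ t in (-π)..π, (∑' k : ℕ, (u k * Real.cos (((k : ℝ) + 1) * t) +
        v k * Real.sin (((k : ℝ) + 1) * t))) * w t) := by
  have h := intervalIntegral.hasSum_integral_of_dominated_convergence (μ := volume) (a := -π) (b := π)
    (F := fun (k : ℕ) t => (u k * Real.cos (((k : ℝ) + 1) * t) +
        v k * Real.sin (((k : ℝ) + 1) * t)) * w t)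
    (f := fun t => (∑' k : ℕ, (u k * Real.cos (((k : ℝ) + 1) * t) +
        v k * Real.sin (((k : ℝ) + 1) * t))) * w t)
    (fun k _ => |u k| + |v k|) (fun k => (by fun_prop : Continuous _).aestronglyMeasurable)
    (fun k => Eventually.of_forall fun t _ => ?_) (Eventually.of_forall fun t _ => hu.add hv) (by simp)
    (Eventually.of_forall fun t _ => ?_)
  · refine (congrArg (fun g => HasSum g _) (funext fun k => ?_)).mp h
    simp only [add_mul, mul_assoc]
    rw [intervalIntegral.integral_add, intervalIntegral.integral_const_mul,
      intervalIntegral.integral_const_mul]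
    all_goals exact (by fun_prop : Continuous _).intervalIntegrable _ _
  · rw [norm_mul]
    calc _ ≤ (|u k| + |v k|) * 1 := by
          refine mul_le_mul ?_ (hw1 t) (norm_nonneg _) (by positivity)
          refine (norm_add_le _ _).trans ?_
          rw [norm_mul, norm_mul]
          simp only [Real.norm_eq_abs]
          gcongr
          · exact mul_le_of_le_one_right (abs_nonneg _) (Real.abs_cos_le_one _)
          · exact mul_le_of_le_one_right (abs_nonneg _) (Real.abs_sin_le_one _)
      _ = _ := mul_one _
  · refine Summable.hasSum ?_ |>.mul_right (w t)
    refine Summable.of_norm_bounded (hu.add hv) fun k => ?_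
    refine (norm_add_le _ _).trans ?_
    rw [norm_mul, norm_mul]
    simp only [Real.norm_eq_abs]
    gcongr
    · exact mul_le_of_le_one_right (abs_nonneg _) (Real.abs_cos_le_one _)
    · exact mul_le_of_le_one_right (abs_nonneg _) (Real.abs_sin_le_one _)

lemma gp_trig_cont {u v : ℕ → ℝ} (hu : Summable fun k => |u k|) (hv : Summable fun k => |v k|) :
    Continuous fun t => ∑' k : ℕ, (u k * Real.cos (((k : ℝ) + 1) * t) +
        v k * Real.sin (((k : ℝ) + 1) * t)) := by
  refine continuous_tsum (fun k => by fun_prop) (hu.add hv) fun k t => ?_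
  refine (norm_add_le _ _).trans ?_
  rw [norm_mul, norm_mul]
  simp only [Real.norm_eq_abs]
  gcongr
  · exact mul_le_of_le_one_right (abs_nonneg _) (Real.abs_cos_le_one _)
  · exact mul_le_of_le_one_right (abs_nonneg _) (Real.abs_sin_le_one _)

lemma gp_coef {u v : ℕ → ℝ} (hu : Summable fun k => |u k|) (hv : Summable fun k => |v k|)
    {A : ℝ} {f : ℝ → ℝ} (hf : ∀ x, f x = A / 2 + ∑' k : ℕ, (u k * Real.cos (((k : ℝ) + 1) * x) +
        v k * Real.sin (((k : ℝ) + 1) * x))) :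
    fourierCoefA f 0 = A ∧ (∀ j : ℕ, fourierCoefA f (j + 1) = u j) ∧
      ∀ j : ℕ, fourierCoefB f (j + 1) = v j := by
  have hc := gp_trig_cont hu hv
  have hpi := Real.pi_pos
  have key : ∀ w : ℝ → ℝ, Continuous w → (∀ t, |w t| ≤ 1) → ∫ t in (-π)..π, f t * w t =
      A / 2 * (∫ t in (-π)..π, w t) + ∑' k, (u k * (∫ t in (-π)..π, Real.cos (((k : ℝ) + 1) * t) * w t) +
      v k * ∫ t in (-π)..π, Real.sin (((k : ℝ) + 1) * t) * w t) := by
    intro w hw hw1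
    rw [(gp_trig_int hu hv w hw hw1).tsum_eq, ← intervalIntegral.integral_const_mul,
      ← intervalIntegral.integral_add]
    · simp_rw [hf, add_mul]
    · exact (by fun_prop : Continuous _).intervalIntegrable _ _
    · exact (hc.mul hw).intervalIntegrable _ _
  have i1 : ∀ j : ℕ, ∫ t in (-π)..π, Real.cos (((j + 1 : ℕ) : ℝ) * t) = 0 := by
    intro j
    have := gp_int_cos ((j : ℤ) + 1) 0
    rw [if_neg (by omega)] at this
    simpa using this
  have i2 : ∀ j : ℕ, ∫ t in (-π)..π, Real.sin (((j + 1 : ℕ) : ℝ) * t) = 0 := by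
    intro j
    have := gp_int_cos ((j : ℤ) + 1) (-(π / 2))
    rw [if_neg (by omega)] at this
    simpa [← sub_eq_add_neg, Real.cos_sub_pi_div_two] using this
  refine ⟨?_, fun j => ?_, fun j => ?_⟩
  · unfold fourierCoefA
    rw [key _ (by fun_prop) fun t => Real.abs_cos_le_one _]
    simp_rw [(gp_orth _ 0).1, (gp_orth _ 0).2.1]
    simp
    field_simp
    ring
  · unfold fourierCoefA
    rw [key _ (by fun_prop) fun t => Real.abs_cos_le_one _]
    simp_rw [(gp_orth _ (j + 1)).1, (gp_orth _ (j + 1)).2.1, i1]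
    simp
    field_simp
  · unfold fourierCoefB
    rw [key _ (by fun_prop) fun t => Real.abs_sin_le_one _]
    simp_rw [(gp_orth _ (j + 1)).2.2.1, (gp_orth _ (j + 1)).2.2.2, i2]
    simp
    field_simp

lemma gp_fsum {u v : ℕ → ℝ} (hu : Summable fun k => |u k|) (hv : Summable fun k => |v k|)
    {A : ℝ} {f : ℝ → ℝ} (hf : ∀ x, f x = A / 2 + ∑' k : ℕ, (u k * Real.cos (((k : ℝ) + 1) * x) +
        v k * Real.sin (((k : ℝ) + 1) * x))) (m : ℕ) (x : ℝ) :
    f x - fourierSum m f x = ∑' k : ℕ, (u (k + m) * Real.cos ((((k + m : ℕ) : ℝ) + 1) * x) +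
        v (k + m) * Real.sin ((((k + m : ℕ) : ℝ) + 1) * x)) := by
  obtain ⟨h0, hA, hB⟩ := gp_coef hu hv hf
  have hs : Summable fun k : ℕ => (u k * Real.cos (((k : ℝ) + 1) * x) +
        v k * Real.sin (((k : ℝ) + 1) * x)) := by
    refine Summable.of_norm_bounded (hu.add hv) fun k => ?_
    refine (norm_add_le _ _).trans ?_
    rw [norm_mul, norm_mul]
    simp only [Real.norm_eq_abs]
    gcongr
    · exact mul_le_of_le_one_right (abs_nonneg _) (Real.abs_cos_le_one _)
    · exact mul_le_of_le_one_right (abs_nonneg _) (Real.abs_sin_le_one _)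
  have e : fourierSum m f x = A / 2 + ∑ k ∈ Finset.range m, (u k * Real.cos (((k : ℝ) + 1) * x) +
        v k * Real.sin (((k : ℝ) + 1) * x)) := by
    unfold fourierSum
    rw [h0, ← Finset.Ico_add_one_right_eq_Icc, Finset.sum_Ico_eq_sum_range]
    congr 1
    refine Finset.sum_congr rfl fun k _ => ?_
    rw [add_comm 1 k, hA, hB]; push_cast; ring
  rw [e, hf, ← hs.sum_add_tsum_nat_add m]
  ring


lemma gp_intg_cos {φ : ℝ → ℝ} (hφ : IntervalIntegrable φ volume (-π) π) (w : ℝ → ℝ)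
    (hw : Continuous w) : IntervalIntegrable (fun t => w t * φ t) volume (-π) π :=
  hφ.continuousOn_mul hw.continuousOn

lemma gp_intg_le {φ : ℝ → ℝ} (hφ : IntervalIntegrable φ volume (-π) π) (w : ℝ → ℝ)
    (hw : Continuous w) (hw1 : ∀ t, |w t| ≤ 1) :
    ∫ t in (-π)..π, ‖w t * φ t‖ ≤ ∫ t in (-π)..π, ‖φ t‖ := by
  refine intervalIntegral.integral_mono_on gp_pi_le (gp_intg_cos hφ w hw).norm hφ.norm fun t _ => ?_
  rw [norm_mul]
  exact mul_le_of_le_one_left (norm_nonneg _) (hw1 t)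

lemma gp_intg_abs_le {φ : ℝ → ℝ} (hφ : IntervalIntegrable φ volume (-π) π) (w : ℝ → ℝ)
    (hw : Continuous w) (hw1 : ∀ t, |w t| ≤ 1) :
    |∫ t in (-π)..π, w t * φ t| ≤ ∫ t in (-π)..π, ‖φ t‖ :=
  (intervalIntegral.norm_integral_le_integral_norm gp_pi_le).trans (gp_intg_le hφ w hw hw1)

lemma gp_kernel_sum {a : ℕ → ℝ} (ha : Summable fun k => |a k|) {φ : ℝ → ℝ}
    (hφ : IntervalIntegrable φ volume (-π) π) (ω : ℕ → ℝ) (b x : ℝ) :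
    HasSum (fun k => a k * ∫ t in (-π)..π, Real.cos (ω k * (x - t) - b) * φ t)
      (∫ t in (-π)..π, (∑' k, a k * Real.cos (ω k * (x - t) - b)) * φ t) := by
  have hI : ∀ k, IntervalIntegrable (fun t => Real.cos (ω k * (x - t) - b) * φ t) volume (-π) π :=
    fun k => gp_intg_cos hφ _ (by fun_prop)
  have h := hasSum_integral_of_summable_integral_norm (μ := volume.restrict (Set.Ioc (-π) π))
    (F := fun k t => a k * (Real.cos (ω k * (x - t) - b) * φ t))
    (fun k => ((hI k).const_mul (a k)).1) (by
      refine Summable.of_nonneg_of_le (fun k => integral_nonneg fun _ => norm_nonneg _) (fun k => ?_)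
        (ha.mul_right (∫ t in (-π)..π, ‖φ t‖))
      simp_rw [norm_mul (a k)]
      rw [integral_const_mul, ← intervalIntegral.integral_of_le gp_pi_le, Real.norm_eq_abs]
      gcongr
      exact gp_intg_le hφ _ (by fun_prop) fun t => Real.abs_cos_le_one _)
  rw [intervalIntegral.integral_of_le gp_pi_le]
  refine (congrArg₂ (fun g y => HasSum g y) (funext fun k => ?_) ?_).mp h
  · rw [integral_const_mul, intervalIntegral.integral_of_le gp_pi_le]
  · congr 1; ext t
    rw [← tsum_mul_right]
    simp_rw [mul_assoc]

lemma gp_residual {α r β : ℝ} (ha : Summable fun k : ℕ => Real.exp (-α * ((k : ℝ) + 1) ^ r))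
    {φ : ℝ → ℝ} (hφ : IntervalIntegrable φ volume (-π) π) {A : ℝ} {f : ℝ → ℝ}
    (hf : ∀ x, f x = A / 2 + (1 / π) * ∫ t in (-π)..π, genPoissonKernel α r β (x - t) * φ t)
    (m : ℕ) (x : ℝ) :
    f x - fourierSum m f x = (1 / π) * ∫ t in (-π)..π,
      (∑' k : ℕ, Real.exp (-α * (((k + m : ℕ) : ℝ) + 1) ^ r) *
        Real.cos ((((k + m : ℕ) : ℝ) + 1) * (x - t) - β * π / 2)) * φ t := by
  have hpi := Real.pi_pos
  set b := β * π / 2 with hb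
  set a : ℕ → ℝ := fun k => Real.exp (-α * ((k : ℝ) + 1) ^ r) with hadef
  have ha' : Summable fun k => |a k| := ha.congr fun k => (abs_of_pos (Real.exp_pos _)).symm
  set C : ℕ → ℝ := fun k => ∫ t in (-π)..π, Real.cos (((k : ℝ) + 1) * t + b) * φ t with hC
  set D : ℕ → ℝ := fun k => ∫ t in (-π)..π, Real.sin (((k : ℝ) + 1) * t + b) * φ t with hD
  have hCD : ∀ (k : ℕ) x, ∫ t in (-π)..π, Real.cos (((k : ℝ) + 1) * (x - t) - b) * φ t =
      C k * Real.cos (((k : ℝ) + 1) * x) + D k * Real.sin (((k : ℝ) + 1) * x) := by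
    intro k x
    rw [hC, hD]
    dsimp only
    rw [← intervalIntegral.integral_mul_const, ← intervalIntegral.integral_mul_const,
      ← intervalIntegral.integral_add]
    · congr 1; ext t
      rw [show ((k : ℝ) + 1) * (x - t) - b = ((k : ℝ) + 1) * x - (((k : ℝ) + 1) * t + b) by ring,
        Real.cos_sub]; ring
    · exact (gp_intg_cos hφ _ (by fun_prop)).mul_const _
    · exact (gp_intg_cos hφ _ (by fun_prop)).mul_const _
  have hu : Summable fun k => |1 / π * (a k * C k)| := by
    refine Summable.of_nonneg_of_le (fun k => abs_nonneg _) (fun k => ?_)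
        ((ha'.mul_right (∫ t in (-π)..π, ‖φ t‖)).mul_left (1 / π))
    rw [abs_mul, abs_mul, abs_of_pos (one_div_pos.2 hpi)]
    gcongr
    exact gp_intg_abs_le hφ _ (by fun_prop) fun t => Real.abs_cos_le_one _
  have hv : Summable fun k => |1 / π * (a k * D k)| := by
    refine Summable.of_nonneg_of_le (fun k => abs_nonneg _) (fun k => ?_)
        ((ha'.mul_right (∫ t in (-π)..π, ‖φ t‖)).mul_left (1 / π))
    rw [abs_mul, abs_mul, abs_of_pos (one_div_pos.2 hpi)]
    gcongr
    exact gp_intg_abs_le hφ _ (by fun_prop) fun t => Real.abs_sin_le_one _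
  have hf' : ∀ x, f x = A / 2 + ∑' k : ℕ, (1 / π * (a k * C k) * Real.cos (((k : ℝ) + 1) * x) +
        1 / π * (a k * D k) * Real.sin (((k : ℝ) + 1) * x)) := by
    intro x
    rw [hf]
    unfold genPoissonKernel
    rw [← (gp_kernel_sum ha' hφ (fun k => (k : ℝ) + 1) b x).tsum_eq, ← tsum_mul_left]
    congr 1
    refine tsum_congr fun k => ?_
    rw [hCD]; ring
  rw [gp_fsum hu hv hf' m x]
  have ham : Summable fun k => |a (k + m)| := (summable_nat_add_iff m).2 ha'
  rw [← (gp_kernel_sum ham hφ (fun k => ((k + m : ℕ) : ℝ) + 1) b x).tsum_eq, ← tsum_mul_left]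
  refine tsum_congr fun k => ?_
  rw [hCD]; ring

lemma gp_eLp_periodic {p : ℝ} (hp : 1 < p) {φ : ℝ → ℝ} (hφ : ∀ x, φ (x + 2 * π) = φ x) :
    eLpNorm φ (ENNReal.ofReal p) (volume.restrict (Set.Ioc (0 : ℝ) (2 * π))) =
    eLpNorm φ (ENNReal.ofReal p) (volume.restrict (Set.Ioc (-π) π)) := by
  rw [eLpNorm_eq_lintegral_rpow_enorm_toReal (by simp; linarith) (by simp),
    eLpNorm_eq_lintegral_rpow_enorm_toReal (by simp; linarith) (by simp)]
  congr 1
  have h1 := isAddFundamentalDomain_Ioc (T := 2 * π) (by positivity) 0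
  have h2 := isAddFundamentalDomain_Ioc (T := 2 * π) (by positivity) (-π)
  rw [zero_add] at h1
  rw [show -π + 2 * π = π by ring] at h2
  refine h1.setLIntegral_eq h2 _ ?_
  have : Function.Periodic (fun x => ‖φ x‖ₑ ^ (ENNReal.ofReal p).toReal) (2 * π) := fun x => by
    simp only [hφ]
  exact this.map_vadd_zmultiples

lemma gp_integral_periodic {φ : ℝ → ℝ} (hφ : ∀ x, φ (x + 2 * π) = φ x) (a : ℝ) :
    ∫ t in a..(a + 2 * π), φ t = ∫ t in (-π)..π, φ t := by
  have := Function.Periodic.intervalIntegral_add_eq (f := φ) hφ a (-π)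
  rwa [show -π + 2 * π = π by ring] at this

/-- Hölder -/
lemma gp_holder {p s : ℝ} (hp : 1 < p) (hs : 1 < s) (hps : 1 / p + 1 / s = 1) {φ G : ℝ → ℝ}
    (hG : Continuous G) (hm : AEStronglyMeasurable φ (volume.restrict (Set.Ioc (-π) π)))
    (hφ : eLpNorm φ (ENNReal.ofReal p) (volume.restrict (Set.Ioc (-π) π)) ≤ 1) :
    |∫ t in (-π)..π, G t * φ t| ≤ gpN s G := by
  have hM : MemLp φ (ENNReal.ofReal p) (volume.restrict (Set.Ioc (-π) π)) :=
    ⟨hm, hφ.trans_lt ENNReal.one_lt_top⟩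
  have hc : s.HolderConjugate p := by
    rw [Real.holderConjugate_iff]; refine ⟨hs, ?_⟩; rw [← one_div, ← one_div]; linarith
  have h := integral_mul_norm_le_Lp_mul_Lq hc (gp_memLp (s := s) hG) hM
  have h1 : gpN p φ ≤ 1 := by
    rw [gpN_eq_lpNorm hp hm, ← toReal_eLpNorm hm]
    exact ENNReal.toReal_le_of_le_ofReal zero_le_one (by simpa using hφ)
  have h2 : |∫ t in (-π)..π, G t * φ t| ≤ ∫ t in Set.Ioc (-π) π, ‖G t‖ * ‖φ t‖ := by
    rw [intervalIntegral.integral_of_le gp_pi_le]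
    refine (norm_integral_le_integral_norm (fun t => G t * φ t)).trans (le_of_eq ?_)
    simp_rw [norm_mul]
  refine h2.trans (h.trans ?_)
  simp only [← intervalIntegral.integral_of_le gp_pi_le]
  change gpN s G * gpN p φ ≤ _
  exact mul_le_of_le_one_right (gpN_nonneg _ _) h1

lemma gp_intble_of_Lp {p : ℝ} (hp : 1 < p) {φ : ℝ → ℝ}
    (hm : AEStronglyMeasurable φ (volume.restrict (Set.Ioc (-π) π)))
    (hφ : eLpNorm φ (ENNReal.ofReal p) (volume.restrict (Set.Ioc (-π) π)) ≤ 1) :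
    IntervalIntegrable φ volume (-π) π := by
  have hM : MemLp φ (ENNReal.ofReal p) (volume.restrict (Set.Ioc (-π) π)) :=
    ⟨hm, hφ.trans_lt ENNReal.one_lt_top⟩
  rw [intervalIntegrable_iff_integrableOn_Ioc_of_le gp_pi_le]
  exact hM.integrable (by simp [hp.le])

/-- dual function -/
lemma gp_dual {p s : ℝ} (hp : 1 < p) (hs : 1 < s) (hps : 1 / p + 1 / s = 1) {H : ℝ → ℝ}
    (hH : Continuous H) (hper : ∀ x, H (x + 2 * π) = H x) (hN : 0 < gpN s H) :
    ∃ ψ : ℝ → ℝ, Measurable ψ ∧ (∀ x, ψ (x + 2 * π) = ψ x) ∧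
      eLpNorm ψ (ENNReal.ofReal p) (volume.restrict (Set.Ioc (-π) π)) ≤ 1 ∧
      ∫ t in (-π)..π, H t * ψ t = gpN s H := by
  have hsp : (s - 1) * p = s := by field_simp at hps; linarith
  set N := gpN s H with hNdef
  set ψ : ℝ → ℝ := fun t => Real.sign (H t) * (|H t| ^ (s - 1) / N ^ (s - 1)) with hψ
  have hsg : Measurable Real.sign := by
    have : Real.sign = fun x : ℝ => if x < 0 then (-1 : ℝ) else if 0 < x then 1 else 0 := by
      ext x; rfl
    rw [this]
    exact Measurable.ite measurableSet_Iio measurable_const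
      (Measurable.ite measurableSet_Ioi measurable_const measurable_const)
  have hmeas : Measurable ψ :=
    (hsg.comp hH.measurable).mul (((hH.measurable.abs).pow_const _).div_const _)
  have hpow : ∀ t, |H t| ^ s = |H t| * |H t| ^ (s - 1) := fun t => by
    rcases (abs_nonneg (H t)).eq_or_lt with h | h
    · rw [← h, Real.zero_rpow (by linarith), zero_mul]
    · rw [Real.rpow_sub_one h.ne']; field_simp
  have hsign : ∀ x : ℝ, x * Real.sign x = |x| := fun x => by
    rcases lt_trichotomy x 0 with h | h | h
    · rw [Real.sign_of_neg h, abs_of_neg h]; ring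
    · simp [h]
    · rw [Real.sign_of_pos h, abs_of_pos h]; ring
  have hψn : ∀ t, ‖ψ t‖ ^ p = |H t| ^ s / N ^ s := by
    intro t
    have h1 : ‖ψ t‖ = |H t| ^ (s - 1) / N ^ (s - 1) := by
      have h2 : 0 ≤ |H t| ^ (s - 1) / N ^ (s - 1) := by positivity
      rw [hψ]; dsimp only
      rw [norm_mul, Real.norm_of_nonneg h2]
      rcases eq_or_ne (H t) 0 with h | h
      · rw [h, abs_zero, Real.zero_rpow (by linarith)]; simp
      · rcases lt_or_gt_of_ne h with h | h
        · rw [Real.sign_of_neg h]; simp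
        · rw [Real.sign_of_pos h]; simp
    rw [h1, Real.div_rpow (by positivity) (by positivity), ← Real.rpow_mul (abs_nonneg _),
      ← Real.rpow_mul hN.le, hsp]
  have hNs := gpN_pow hs H
  refine ⟨ψ, hmeas, fun x => by simp only [hψ, hper], ?_, ?_⟩
  · have h1 : gpN p ψ = 1 := by
      unfold gpN
      simp_rw [hψn]
      rw [intervalIntegral.integral_div]
      simp_rw [← Real.norm_eq_abs]
      rw [← hNs, div_self (by positivity), Real.one_rpow]
    have hψb : MemLp ψ (ENNReal.ofReal p) (volume.restrict (Set.Ioc (-π) π)) := by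
      rw [← integrable_norm_rpow_iff hmeas.aestronglyMeasurable (by simp; linarith) (by simp)]
      have : IntervalIntegrable (fun t => |H t| ^ s / N ^ s) volume (-π) π :=
        Continuous.intervalIntegrable
          ((Continuous.rpow_const (by fun_prop) fun _ => Or.inr (by linarith)).div_const _) _ _
      rw [ENNReal.toReal_ofReal (by linarith)]
      simp_rw [hψn]
      exact this.1
    rw [gpN_eq_lpNorm hp hmeas.aestronglyMeasurable, ← toReal_eLpNorm hmeas.aestronglyMeasurable] at h1
    rw [← ENNReal.ofReal_toReal hψb.eLpNorm_ne_top, h1]; simp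
  · have : ∀ t, H t * ψ t = ‖H t‖ ^ s / N ^ (s - 1) := fun t => by
      rw [hψ]; dsimp only
      rw [← mul_assoc, hsign, Real.norm_eq_abs, hpow]; ring
    simp_rw [this]
    rw [intervalIntegral.integral_div, ← hNs, Real.rpow_sub_one hN.ne']
    field_simp
    rfl


lemma gp_eLp_shift {p : ℝ} (hp : 1 < p) {φ : ℝ → ℝ} (hφ : ∀ x, φ (x + 2 * π) = φ x) (h : ℝ) :
    eLpNorm (fun t => φ (t + h)) (ENNReal.ofReal p) (volume.restrict (Set.Ioc (-π) π)) =
    eLpNorm φ (ENNReal.ofReal p) (volume.restrict (Set.Ioc (-π) π)) := by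
  rw [eLpNorm_eq_lintegral_rpow_enorm_toReal (by simp; linarith) (by simp),
    eLpNorm_eq_lintegral_rpow_enorm_toReal (by simp; linarith) (by simp)]
  congr 1
  have h0 := (measurePreserving_add_right (volume : Measure ℝ) h).setLIntegral_comp_preimage_emb
    (Homeomorph.addRight h).measurableEmbedding (fun x => ‖φ x‖ₑ ^ (ENNReal.ofReal p).toReal)
    (Set.Ioc (-π + h) (π + h))
  rw [Set.preimage_add_const_Ioc, add_sub_cancel_right, add_sub_cancel_right] at h0
  rw [h0]
  have h1 := isAddFundamentalDomain_Ioc (T := 2 * π) (by positivity) (-π + h)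
  have h2 := isAddFundamentalDomain_Ioc (T := 2 * π) (by positivity) (-π)
  rw [show -π + h + 2 * π = π + h by ring] at h1
  rw [show -π + 2 * π = π by ring] at h2
  refine h1.setLIntegral_eq h2 _ ?_
  have : Function.Periodic (fun x => ‖φ x‖ₑ ^ (ENNReal.ofReal p).toReal) (2 * π) := fun x => by
    simp only [hφ]
  exact this.map_vadd_zmultiples

lemma gp_int_shift {φ : ℝ → ℝ} (hφ : ∀ x, φ (x + 2 * π) = φ x) (h : ℝ) :
    ∫ t in (-π)..π, φ (t + h) = ∫ t in (-π)..π, φ t := by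
  rw [intervalIntegral.integral_comp_add_right, show π + h = (-π + h) + 2 * π by ring,
    gp_integral_periodic hφ]

lemma gpR_periodic (n : ℕ) (u : ℝ) {F : ℝ → ℂ} (hF : ∀ t, F (t + 2 * π) = F t) (t : ℝ) :
    gpR n u F (t + 2 * π) = gpR n u F t := by
  unfold gpR
  rw [hF]
  congr 2
  rw [show (((n * (t + 2 * π) + u : ℝ) : ℂ) * Complex.I) =
    ((n * t + u : ℝ) : ℂ) * Complex.I + n * (2 * π * Complex.I) by push_cast; ring,
    Complex.exp_add, Complex.exp_nat_mul_two_pi_mul_I, mul_one]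

lemma gpR_half {n : ℕ} (hn : 0 < n) (u : ℝ) (F : ℝ → ℂ) (t : ℝ) :
    gpR n u F (t + π / n) = -gpR n u (fun t => F (t + π / n)) t := by
  unfold gpR
  have hn' : (n : ℝ) ≠ 0 := by positivity
  rw [show (((n * (t + π / n) + u : ℝ) : ℂ) * Complex.I) =
    ((n * t + u : ℝ) : ℂ) * Complex.I + π * Complex.I by
      rw [mul_add, mul_div_cancel₀ _ hn']; push_cast; ring,
    Complex.exp_add, Complex.exp_pi_mul_I]
  simp

lemma gpP_eq {α r β : ℝ} {n : ℕ} (hn : 0 < n)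
    (hs : Summable (fun k : ℕ => Real.exp (-gpg α r n k))) (t : ℝ) :
    ∑' k : ℕ, Real.exp (-α * (((k + (n - 1) : ℕ) : ℝ) + 1) ^ r) *
        Real.cos ((((k + (n - 1) : ℕ) : ℝ) + 1) * t - β * π / 2) =
      Real.exp (-α * (n : ℝ) ^ r) * gpR n (-(β * π / 2)) (gpQ α r n) t := by
  have hk : ∀ k : ℕ, (((k + (n - 1) : ℕ) : ℝ) + 1) = (n : ℝ) + k := fun k => by
    have : k + (n - 1) + 1 = n + k := by omega
    exact_mod_cast this
  simp_rw [hk]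
  unfold gpR gpQ
  have hs' : Summable (fun k : ℕ => (Real.exp (-gpg α r n k) : ℂ) *
      Complex.exp ((t : ℂ) * Complex.I) ^ k) := by
    refine Summable.of_norm (hs.congr fun k => ?_)
    rw [norm_mul, norm_pow, gpz_norm, one_pow, mul_one, Complex.norm_real, Real.norm_eq_abs,
      abs_of_pos (Real.exp_pos _)]
  rw [← tsum_mul_left, Complex.re_tsum (hs'.mul_left _), ← tsum_mul_left]
  refine tsum_congr fun k => ?_
  rw [← Complex.exp_nat_mul, mul_left_comm, ← Complex.exp_add, Complex.re_ofReal_mul,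
    show ((n * t + -(β * π / 2) : ℝ) : ℂ) * Complex.I + k * (t * Complex.I) =
      (((n + k) * t - β * π / 2 : ℝ) : ℂ) * Complex.I by push_cast; ring,
    Complex.exp_ofReal_mul_I_re, ← mul_assoc, ← Real.exp_add]
  congr 2
  unfold gpg; ring

lemma gp_a_summable {α r : ℝ} {n : ℕ} (hn : 0 < n)
    (hs : Summable (fun k : ℕ => Real.exp (-gpg α r n k))) :
    Summable fun k : ℕ => Real.exp (-α * ((k : ℝ) + 1) ^ r) := by
  rw [← summable_nat_add_iff (n - 1)]
  refine (hs.mul_left (Real.exp (-α * (n : ℝ) ^ r))).congr fun k => ?_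
  have hk : (((k + (n - 1) : ℕ) : ℝ) + 1) = (n : ℝ) + k := by
    have : k + (n - 1) + 1 = n + k := by omega
    exact_mod_cast this
  rw [hk, ← Real.exp_add]
  congr 1
  unfold gpg; ring

lemma gp_K_periodic (α r β x : ℝ) : genPoissonKernel α r β (x + 2 * π) = genPoissonKernel α r β x := by
  unfold genPoissonKernel
  refine tsum_congr fun k => ?_
  congr 1
  have := Real.cos_add_nat_mul_two_pi (((k : ℝ) + 1) * x - β * π / 2) (k + 1)
  rw [← this]; congr 1; push_cast; ring

lemma gp_EnC_le {α r β U : ℝ} {P : ℝ≥0∞} {n : ℕ} (hU : 0 ≤ U)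
    (h : ∀ f ∈ poissonClass α r β P, ∀ x, |f x - fourierSum (n - 1) f x| ≤ U) :
    EnC α r β P n ≤ U ∧ ∀ f ∈ poissonClass α r β P, ∀ x,
      |f x - fourierSum (n - 1) f x| ≤ EnC α r β P n := by
  have h1 : ∀ f, (⨆ (_ : f ∈ poissonClass α r β P), ⨆ x : ℝ, |f x - fourierSum (n - 1) f x|) ≤ U :=
    fun f => Real.iSup_le (fun hf => Real.iSup_le (h f hf) hU) hU
  refine ⟨Real.iSup_le h1 hU, fun f hf x => ?_⟩
  unfold EnC
  refine le_trans ?_ (le_ciSup (f := fun f => ⨆ (_ : f ∈ poissonClass α r β P),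
    ⨆ x : ℝ, |f x - fourierSum (n - 1) f x|) ⟨U, Set.forall_mem_range.2 h1⟩ f)
  rw [ciSup_pos hf]
  exact le_ciSup (f := fun x => |f x - fourierSum (n - 1) f x|) ⟨U, Set.forall_mem_range.2 (h f hf)⟩ x

theorem gp_Hbd {α r u h : ℝ} {n : ℕ} (hn : 0 < n) (hh : h = π / n) (t : ℝ) :
    ‖1 / 2 * (gpR n u (gpQ α r n) (-t) - gpR n u (gpQ α r n) (-(t - h))) - gpR n u (gpQ α r n) (-t)‖ ≤
      1 * ‖gpQ α r n (-t + h) - gpQ α r n (-t)‖ := by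
  have e5 : gpR n u (gpQ α r n) (-(t - h)) = -gpR n u (fun t => gpQ α r n (t + h)) (-t) := by
    rw [hh, ← gpR_half hn]
    congr 1; ring
  have e4 : 1 / 2 * (gpR n u (gpQ α r n) (-t) - gpR n u (gpQ α r n) (-(t - h))) - gpR n u (gpQ α r n) (-t)
      = 1 / 2 * gpR n u (fun t => gpQ α r n (t + h) - gpQ α r n t) (-t) := by
    rw [e5]
    unfold gpR
    beta_reduce
    rw [mul_sub (Complex.exp _), Complex.sub_re]
    ring
  rw [e4, norm_mul]
  have h1 := gpR_le n u (fun t => gpQ α r n (t + h) - gpQ α r n t) (-t)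
  rw [Real.norm_of_nonneg (by norm_num : (0 : ℝ) ≤ 1 / 2)]
  have h2 := norm_nonneg (gpR n u (fun t => gpQ α r n (t + h) - gpQ α r n t) (-t))
  have h3 : ‖gpR n u (fun t => gpQ α r n (t + h) - gpQ α r n t) (-t)‖ ≤ ‖gpQ α r n (-t + h) - gpQ α r n (-t)‖ := h1
  linarith

theorem gp_HG {α r u s η : ℝ} {n : ℕ} (hs : 1 < s) (hn : 0 < n) (hQc : Continuous (gpQ α r n))
    (hη : gpN s (fun t => gpQ α r n (t + π / n) - gpQ α r n t) ≤ η) :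
    gpN s (gpR n u (gpQ α r n)) - η ≤ gpN s (fun t => 1 / 2 * (gpR n u (gpQ α r n) (-t) -
      gpR n u (gpQ α r n) (-(t - π / n)))) := by
  have hRc : Continuous (gpR n u (gpQ α r n)) := gpR_cont n u hQc
  generalize hR : gpR n u (gpQ α r n) = R at *
  have hGc : Continuous (fun t => R (-t)) := hRc.comp (by fun_prop)
  have hHc : Continuous (fun t => 1 / 2 * (R (-t) - R (-(t - π / n)))) := by fun_prop
  have e1 := gpN_neg (s := s) (F := R)
  have e2 := (abs_le.1 (gpN_abs_sub hs hHc hGc)).1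
  have hD : Continuous (fun t => gpQ α r n (-t + π / n) - gpQ α r n (-t)) := by fun_prop
  have hD' : Continuous (fun t => 1 / 2 * (R (-t) - R (-(t - π / n))) - R (-t)) := by fun_prop
  have e3 : gpN s (fun t => 1 / 2 * (R (-t) - R (-(t - π / n))) - R (-t)) ≤
      1 * gpN s (fun t => gpQ α r n (-t + π / n) - gpQ α r n (-t)) :=
    gpN_le_mul hs zero_le_one hD' hD fun t _ => by rw [← hR]; exact gp_Hbd hn rfl t
  have e6 := gpN_neg (s := s) (F := fun t => gpQ α r n (t + π / n) - gpQ α r n t)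
  linarith

set_option maxHeartbeats 1600000 in
lemma gp_EnC {α r β p s η : ℝ} {n : ℕ} (hp : 1 < p) (hs : 1 < s) (hps : 1 / p + 1 / s = 1)
    (hn : 0 < n) (hsum : Summable (fun k : ℕ => Real.exp (-gpg α r n k)))
    (hNM : ∀ φ : ℝ → ℝ, ∀ x : ℝ, AEStronglyMeasurable (fun t => genPoissonKernel α r β (x - t) * φ t)
      (volume.restrict (Set.Ioc (-π) π)) → AEStronglyMeasurable φ (volume.restrict (Set.Ioc (-π) π)))
    (hη : gpN s (fun t => gpQ α r n (t + π / n) - gpQ α r n t) ≤ η) :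
    EnC α r β (ENNReal.ofReal p) n ≤
      1 / π * (Real.exp (-α * (n : ℝ) ^ r) * gpN s (gpR n (-(β * π / 2)) (gpQ α r n))) ∧
    1 / π * (Real.exp (-α * (n : ℝ) ^ r) * (gpN s (gpR n (-(β * π / 2)) (gpQ α r n)) - η)) ≤
      EnC α r β (ENNReal.ofReal p) n := by
  have hpi := Real.pi_pos
  set e := Real.exp (-α * (n : ℝ) ^ r) with he
  have he0 : 0 < e := Real.exp_pos _
  set R := gpR n (-(β * π / 2)) (gpQ α r n) with hR
  have hQc := gpQ_cont hsum
  have hRc : Continuous R := gpR_cont _ _ hQc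
  have hRp : ∀ t, R (t + 2 * π) = R t := gpR_periodic _ _ gpQ_periodic
  have ha := gp_a_summable hn hsum
  have hres : ∀ (φ : ℝ → ℝ) (_ : IntervalIntegrable φ volume (-π) π) (A : ℝ) (f : ℝ → ℝ)
      (_ : ∀ x, f x = A / 2 + (1 / π) * ∫ t in (-π)..π, genPoissonKernel α r β (x - t) * φ t) (x : ℝ),
      f x - fourierSum (n - 1) f x = 1 / π * (e * ∫ t in (-π)..π, R (x - t) * φ t) := by
    intro φ hφ A f hf x
    rw [gp_residual ha hφ hf]
    simp_rw [gpP_eq hn hsum]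
    simp_rw [mul_assoc]
    rw [intervalIntegral.integral_const_mul]
  have hGN : ∀ x, gpN s (fun t => R (x - t)) = gpN s R := by
    intro x
    have h1 := gpN_neg (s := s) (F := fun t => R (t + x))
    have h2 := gpN_shift (s := s) hRp x
    rw [← h2, ← h1]
    congr 1; ext t; ring_nf
  have hup : ∀ f ∈ poissonClass α r β (ENNReal.ofReal p), ∀ x,
      |f x - fourierSum (n - 1) f x| ≤ 1 / π * (e * gpN s R) := by
    rintro f ⟨_, A, φ, hφp, hφn, _, hf⟩ x
    by_cases hm : AEStronglyMeasurable φ (volume.restrict (Set.Ioc (-π) π))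
    · rw [gp_eLp_periodic hp hφp] at hφn
      rw [hres φ (gp_intble_of_Lp hp hm hφn) A f hf x, abs_mul, abs_mul, abs_of_pos he0,
        abs_of_pos (one_div_pos.2 hpi), ← hGN x]
      gcongr
      exact gp_holder hp hs hps (hRc.comp (by fun_prop)) hm hφn
    · have h0 : ∀ x, ∫ t in (-π)..π, genPoissonKernel α r β (x - t) * φ t = 0 := by
        intro x
        rw [intervalIntegral.integral_of_le gp_pi_le]
        exact integral_non_aestronglyMeasurable fun h => hm (hNM φ x h)
      have := hres (fun _ => 0) (by simp) A f (fun x => by rw [hf, h0]; simp) x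
      rw [this]
      simp only [mul_zero, intervalIntegral.integral_zero, abs_zero]
      have := gpN_nonneg s R
      positivity
  have hU0 : 0 ≤ 1 / π * (e * gpN s R) := by
    have := gpN_nonneg s R
    positivity
  obtain ⟨h1, h2⟩ := gp_EnC_le hU0 hup
  refine ⟨h1, ?_⟩
  have hE0 : 0 ≤ EnC α r β (ENNReal.ofReal p) n :=
    Real.iSup_nonneg fun f => Real.iSup_nonneg fun _ => Real.iSup_nonneg fun _ => abs_nonneg _
  set h := π / n with hh
  set G : ℝ → ℝ := fun t => R (-t) with hG
  set H : ℝ → ℝ := fun t => 1 / 2 * (G t - G (t - h)) with hH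
  have hGc : Continuous G := hRc.comp (by fun_prop)
  have hGp : ∀ t, G (t + 2 * π) = G t := fun t => by
    simp only [hG]; rw [← hRp (-(t + 2 * π))]; congr 1; ring
  have hHc : Continuous H := by
    refine continuous_const.mul (hGc.sub (hGc.comp (by fun_prop)))
  have hHp : ∀ t, H (t + 2 * π) = H t := fun t => by
    simp only [hH]
    rw [hGp, show t + 2 * π - h = (t - h) + 2 * π by ring, hGp]
  have hHG : gpN s R - η ≤ gpN s H := gp_HG hs hn hQc hη
  rcases (gpN_nonneg s H).eq_or_lt with hz | hpos
  · refine le_trans ?_ hE0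
    have : gpN s R - η ≤ 0 := by rw [hz]; exact hHG
    have h3 : e * (gpN s R - η) ≤ 0 := mul_nonpos_of_nonneg_of_nonpos he0.le this
    exact mul_nonpos_of_nonneg_of_nonpos (by positivity) h3
  obtain ⟨ψ, hψm, hψp, hψn, hψi⟩ := gp_dual hp hs hps hHc hHp hpos
  have hψI := gp_intble_of_Lp hp hψm.aestronglyMeasurable hψn
  have hψ'm : Measurable fun t => ψ (t + h) := hψm.comp (by fun_prop)
  have hψ'n : eLpNorm (fun t => ψ (t + h)) (ENNReal.ofReal p) (volume.restrict (Set.Ioc (-π) π)) ≤ 1 := by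
    rw [gp_eLp_shift hp hψp]; exact hψn
  have hψ'I := gp_intble_of_Lp hp hψ'm.aestronglyMeasurable hψ'n
  set φ : ℝ → ℝ := fun t => (1 / 2 : ℝ) * (ψ t - ψ (t + h)) with hφ
  have hφp : ∀ t, φ (t + 2 * π) = φ t := fun t => by
    simp only [hφ]
    rw [hψp, show t + 2 * π + h = (t + h) + 2 * π by ring, hψp]
  have hφI : IntervalIntegrable φ volume (-π) π := (hψI.sub hψ'I).const_mul _
  have hφn : eLpNorm φ (ENNReal.ofReal p) (volume.restrict (Set.Ioc (-π) π)) ≤ 1 := by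
    have : φ = (1 / 2 : ℝ) • (ψ - fun t => ψ (t + h)) := rfl
    rw [this, eLpNorm_const_smul]
    have h3 := eLpNorm_sub_le (p := ENNReal.ofReal p) (μ := volume.restrict (Set.Ioc (-π) π))
      hψm.aestronglyMeasurable hψ'm.aestronglyMeasurable (by simp [hp.le])
    calc _ ≤ ‖(1 / 2 : ℝ)‖ₑ * (1 + 1) := by gcongr; exact h3.trans (add_le_add hψn hψ'n)
      _ = 1 := by
        rw [Real.enorm_of_nonneg (by norm_num), one_add_one_eq_two, ← ENNReal.ofReal_ofNat,
          ← ENNReal.ofReal_mul (by norm_num)]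
        norm_num
  have hφ0 : ∫ t in (0 : ℝ)..(2 * π), φ t = 0 := by
    have h3 := gp_integral_periodic hφp 0
    rw [zero_add] at h3
    rw [h3]
    simp only [hφ]
    rw [intervalIntegral.integral_const_mul, intervalIntegral.integral_sub hψI hψ'I,
      gp_int_shift hψp, sub_self, mul_zero]
  have hφG : ∫ t in (-π)..π, G t * φ t = gpN s H := by
    rw [← hψi]
    have i1 : IntervalIntegrable (fun t => G t * ψ t) volume (-π) π := gp_intg_cos hψI G hGc
    have i2 : IntervalIntegrable (fun t => G t * ψ (t + h)) volume (-π) π := gp_intg_cos hψ'I G hGc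
    have i3 : IntervalIntegrable (fun t => G (t - h) * ψ t) volume (-π) π :=
      gp_intg_cos hψI _ (hGc.comp (by fun_prop))
    have e1 : ∀ t, G t * φ t = 1 / 2 * (G t * ψ t - G t * ψ (t + h)) := fun t => by
      simp only [hφ]; ring
    have e2 : ∀ t, H t * ψ t = 1 / 2 * (G t * ψ t - G (t - h) * ψ t) := fun t => by
      simp only [hH]; ring
    simp_rw [e1, e2]
    rw [intervalIntegral.integral_const_mul, intervalIntegral.integral_const_mul,
      intervalIntegral.integral_sub i1 i2, intervalIntegral.integral_sub i1 i3]
    congr 2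
    rw [← gp_int_shift (φ := fun t => G (t - h) * ψ t) _ h]
    · simp only [add_sub_cancel_right]
    · intro t
      rw [hψp, show t + 2 * π - h = (t - h) + 2 * π by ring, hGp]
  set f : ℝ → ℝ := fun x => 0 / 2 + (1 / π) * ∫ t in (-π)..π, genPoissonKernel α r β (x - t) * φ t with hf
  have hfm : f ∈ poissonClass α r β (ENNReal.ofReal p) := by
    refine ⟨fun x => ?_, 0, φ, hφp, ?_, hφ0, fun x => rfl⟩
    · simp only [hf]
      congr 2; congr 1; ext t
      rw [show x + 2 * π - t = x - t + 2 * π by ring, gp_K_periodic]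
    · rw [gp_eLp_periodic hp hφp]; exact hφn
  have h3 := h2 f hfm 0
  rw [hres φ hφI 0 f (fun x => rfl) 0] at h3
  simp only [zero_sub] at h3
  change |1 / π * (e * ∫ t in (-π)..π, G t * φ t)| ≤ _ at h3
  rw [hφG] at h3
  refine le_trans ?_ ((le_abs_self _).trans h3)
  gcongr


/-- Backward difference. -/
def gpDf (a : ℕ → ℝ) : ℕ → ℝ := fun k => a k - a (k + 1)

/-- Completely monotone sequences. -/
def gpCM (a : ℕ → ℝ) : Prop := ∀ i k, 0 ≤ (gpDf^[i] a) k

lemma gpCM_nonneg {a : ℕ → ℝ} (ha : gpCM a) (k : ℕ) : 0 ≤ a k := ha 0 k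

lemma gpCM_D {a : ℕ → ℝ} (ha : gpCM a) : gpCM (gpDf a) := fun i k => ha (i + 1) k

lemma gpDf_add (i : ℕ) : ∀ a b : ℕ → ℝ, gpDf^[i] (fun k => a k + b k) = fun k => (gpDf^[i] a) k + (gpDf^[i] b) k := by
  induction i with
  | zero => intro a b; rfl
  | succ i ih =>
    intro a b
    simp only [Function.iterate_succ, Function.comp]
    rw [← ih]
    congr 1; ext k; simp only [gpDf]; ring

lemma gpDf_smul (i : ℕ) (c : ℝ) : ∀ a : ℕ → ℝ, gpDf^[i] (fun k => c * a k) = fun k => c * (gpDf^[i] a) k := by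
  induction i with
  | zero => intro a; rfl
  | succ i ih =>
    intro a
    simp only [Function.iterate_succ, Function.comp]
    rw [← ih]
    congr 1; ext k; simp only [gpDf]; ring

lemma gpDf_shift (i : ℕ) (m : ℕ) : ∀ a : ℕ → ℝ, gpDf^[i] (fun k => a (k + m)) = fun k => (gpDf^[i] a) (k + m) := by
  induction i with
  | zero => intro a; rfl
  | succ i ih =>
    intro a
    simp only [Function.iterate_succ, Function.comp]
    rw [← ih]
    congr 1; ext k; simp only [gpDf]; rw [show k + 1 + m = k + m + 1 by ring]

lemma gpCM_add {a b : ℕ → ℝ} (ha : gpCM a) (hb : gpCM b) : gpCM (fun k => a k + b k) := fun i k => by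
  rw [gpDf_add]; exact add_nonneg (ha i k) (hb i k)

lemma gpCM_smul {a : ℕ → ℝ} {c : ℝ} (hc : 0 ≤ c) (ha : gpCM a) : gpCM (fun k => c * a k) := fun i k => by
  rw [gpDf_smul]; exact mul_nonneg hc (ha i k)

lemma gpCM_shift {a : ℕ → ℝ} (m : ℕ) (ha : gpCM a) : gpCM (fun k => a (k + m)) := fun i k => by
  rw [gpDf_shift]; exact ha i _

lemma gpCM_zero : gpCM (fun _ => 0) := fun i k => by
  have := gpDf_smul i 0 (fun _ => 0)
  simp only [zero_mul] at this
  rw [this]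

lemma gpCM_one : gpCM (fun _ => 1) := by
  intro i k
  cases i with
  | zero => exact zero_le_one
  | succ i =>
    simp only [Function.iterate_succ, Function.comp]
    have : gpDf (fun _ => 1) = fun _ => 0 := by ext k; simp [gpDf]
    rw [this]; exact gpCM_zero i k

lemma gpCM_mul {a b : ℕ → ℝ} (ha : gpCM a) (hb : gpCM b) : gpCM (fun k => a k * b k) := by
  intro i
  induction i generalizing a b with
  | zero => intro k; exact mul_nonneg (ha 0 k) (hb 0 k)
  | succ i ih =>
    intro k
    simp only [Function.iterate_succ, Function.comp]
    have : gpDf (fun k => a k * b k) = fun k => (gpDf a) k * b k + a (k + 1) * (gpDf b) k := by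
      ext k; simp only [gpDf]; ring
    rw [this, gpDf_add]
    exact add_nonneg (ih (gpCM_D ha) hb k) (ih (gpCM_shift 1 ha) (gpCM_D hb) k)

lemma gpCM_pow {a : ℕ → ℝ} (ha : gpCM a) (j : ℕ) : gpCM (fun k => a k ^ j) := by
  induction j with
  | zero => simpa using gpCM_one
  | succ j ih => simp only [pow_succ]; exact gpCM_mul ih ha

lemma gpCM_sum {a : ℕ → ℕ → ℝ} (ha : ∀ j, gpCM (a j)) (N : ℕ) : gpCM (fun k => ∑ j ∈ Finset.range N, a j k) := by
  induction N with
  | zero => simpa using gpCM_zero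
  | succ N ih => simp only [Finset.sum_range_succ]; exact gpCM_add ih (ha N)

lemma gpDf_cont : Continuous gpDf := by
  unfold gpDf; fun_prop

lemma gpCM_lim {a : ℕ → ℕ → ℝ} {b : ℕ → ℝ} (ha : ∀ N, gpCM (a N))
    (h : ∀ k, Tendsto (fun N => a N k) atTop (nhds (b k))) : gpCM b := by
  intro i k
  have h1 : Tendsto a atTop (nhds b) := tendsto_pi_nhds.2 h
  have h2 := ((gpDf_cont.iterate i).tendsto b).comp h1
  exact ge_of_tendsto' (tendsto_pi_nhds.1 h2 k) fun N => ha N i k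

lemma gpCM_exp {a : ℕ → ℝ} (ha : gpCM a) : gpCM (fun k => Real.exp (a k)) := by
  refine gpCM_lim (a := fun N k => ∑ j ∈ Finset.range N, 1 / (j.factorial : ℝ) * a k ^ j)
    (fun N => gpCM_sum (fun j => gpCM_smul (by positivity) (gpCM_pow ha j)) N) fun k => ?_
  have := (NormedSpace.expSeries_div_hasSum_exp (a k)).tendsto_sum_nat
  rw [← Real.exp_eq_exp_ℝ] at this
  refine this.congr fun N => Finset.sum_congr rfl fun j _ => by ring

lemma gpCM_B {c : ℕ → ℝ} (hd : gpCM (fun k => c (k + 1) - c k))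
    (h : ∀ k, Tendsto (fun N => c (k + N) - c N) atTop (nhds 0)) : gpCM (fun k => Real.exp (-c k)) := by
  refine gpCM_lim (a := fun N k => Real.exp (-c N) * Real.exp (∑ m ∈ Finset.range N, (c (k + m + 1) - c (k + m))))
    (fun N => gpCM_smul (Real.exp_pos _).le (gpCM_exp (gpCM_sum (fun m => gpCM_shift m hd) N))) fun k => ?_
  have h1 : ∀ N, Real.exp (-c N) * Real.exp (∑ m ∈ Finset.range N, (c (k + m + 1) - c (k + m))) =
      Real.exp (c (k + N) - c N - c k) := fun N => by
    have := Finset.sum_range_sub (fun m => c (k + m)) N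
    simp only [← add_assoc] at this
    rw [this, ← Real.exp_add]
    congr 1; simp only [add_zero]; ring
  simp_rw [h1]
  have := (Real.continuous_exp.tendsto _).comp ((h k).sub_const (c k))
  rw [zero_sub] at this
  exact this

lemma gpCM_integral {μ : Measure ℝ} {a : ℝ → ℕ → ℝ} (ha : ∀ᵐ x ∂μ, gpCM (a x))
    (hi : ∀ k, Integrable (fun x => a x k) μ) : gpCM (fun k => ∫ x, a x k ∂μ) := by
  have key : ∀ (i : ℕ) (b : ℝ → ℕ → ℝ), (∀ k, Integrable (fun x => b x k) μ) →
      gpDf^[i] (fun k => ∫ x, b x k ∂μ) = fun k => ∫ x, (gpDf^[i] (b x)) k ∂μ := by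
    intro i
    induction i with
    | zero => intro b _; rfl
    | succ i ih =>
      intro b hb
      simp only [Function.iterate_succ, Function.comp]
      rw [← ih (fun x => gpDf (b x)) fun k => (hb k).sub (hb (k + 1))]
      congr 1; ext k; simp only [gpDf]
      rw [integral_sub (hb k) (hb (k + 1))]
  intro i k
  rw [key i a hi]
  refine integral_nonneg_of_ae ?_
  filter_upwards [ha] with x hx using hx i k

lemma gpCM_geom {y : ℝ} (hy0 : 0 ≤ y) (hy1 : y ≤ 1) : gpCM (fun k => y ^ k) := by
  intro i
  have : gpDf^[i] (fun k => y ^ k) = fun k => (1 - y) ^ i * y ^ k := by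
    induction i with
    | zero => simp
    | succ i ih =>
      rw [Function.iterate_succ_apply', ih]
      ext k; simp only [gpDf]; ring
  intro k
  rw [this]
  have : 0 ≤ 1 - y := by linarith
  positivity

lemma gpCM_rpow {q s : ℝ} (hq : 0 < q) (hs : 0 < s) : gpCM (fun k => ((k : ℝ) + s) ^ (-q)) := by
  have h1 : gpCM (fun k : ℕ => ∫ t in Set.Ioi (0 : ℝ), t ^ (q - 1) * Real.exp (-(((k : ℝ) + s) * t))) := by
    refine gpCM_integral ?_ fun k => ?_
    · filter_upwards [ae_restrict_mem measurableSet_Ioi] with t ht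
      have ht : 0 < t := ht
      have h2 := gpCM_smul (c := t ^ (q - 1) * Real.exp (-(s * t))) (by positivity)
        (gpCM_geom (Real.exp_pos (-t)).le (by rw [Real.exp_le_one_iff]; linarith))
      convert h2 using 2 with k
      rw [← Real.exp_nat_mul, mul_assoc, ← Real.exp_add]
      congr 2; ring
    · have := integrableOn_rpow_mul_exp_neg_mul_rpow (p := 1) (s := q - 1) (b := (k : ℝ) + s)
        (by linarith) one_pos (by positivity)
      simp only [Real.rpow_one, neg_mul] at this
      exact this
  have h2 := gpCM_smul (c := 1 / Real.Gamma q) (by have := Real.Gamma_pos_of_pos hq; positivity) h1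
  convert h2 using 2 with k
  have hks : 0 < (k : ℝ) + s := by positivity
  have := (Real.Gamma_pos_of_pos hq).ne'
  rw [Real.integral_rpow_mul_exp_neg_mul_Ioi hq hks, one_div (_ + _), Real.inv_rpow hks.le, Real.rpow_neg hks.le]
  field_simp

lemma gpCM_diff {r : ℝ} (hr0 : 0 < r) (hr1 : r < 1) :
    gpCM (fun k => ((k : ℝ) + 1 + 1) ^ r - ((k : ℝ) + 1) ^ r) := by
  have h1 : gpCM (fun k : ℕ => ∫ t in Set.Ioc (0 : ℝ) 1, r * ((k : ℝ) + (1 + t)) ^ (-(1 - r))) := by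
    refine gpCM_integral ?_ fun k => ?_
    · filter_upwards [ae_restrict_mem measurableSet_Ioc] with t ht
      exact gpCM_smul hr0.le (gpCM_rpow (by linarith) (by linarith [ht.1]))
    · rw [← IntegrableOn, ← intervalIntegrable_iff_integrableOn_Ioc_of_le zero_le_one]
      refine ContinuousOn.intervalIntegrable ?_
      rw [Set.uIcc_of_le zero_le_one]
      refine continuousOn_const.mul (ContinuousOn.rpow_const (by fun_prop) fun t ht => Or.inl ?_)
      have := ht.1
      positivity
  convert h1 using 2 with k
  rw [← intervalIntegral.integral_of_le zero_le_one]
  rw [intervalIntegral.integral_const_mul]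
  have h2 := intervalIntegral.integral_comp_add_left (a := 0) (b := 1) (fun x : ℝ => x ^ (-(1 - r))) ((k : ℝ) + 1)
  simp only [add_assoc] at h2
  rw [h2, integral_rpow (Or.inl (by linarith))]
  have h3 : -(1 - r) + 1 = r := by ring
  rw [h3, add_zero]
  field_simp
  norm_num [add_assoc]

lemma gpCM_a {α r : ℝ} (hα : 0 < α) (hr0 : 0 < r) (hr1 : r < 1) :
    gpCM (fun k => Real.exp (-α * ((k : ℝ) + 1) ^ r)) := by
  have := gpCM_B (c := fun k => α * ((k : ℝ) + 1) ^ r) ?_ fun k => ?_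
  · simpa only [neg_mul] using this
  · have := gpCM_smul hα.le (gpCM_diff hr0 hr1)
    convert this using 2 with k
    push_cast; ring
  · have hlim : Tendsto (fun N : ℕ => α * r * k * ((N : ℝ) + 1) ^ (-(1 - r))) atTop (nhds 0) := by
      have h1 : Tendsto (fun N : ℕ => (N : ℝ) + 1) atTop atTop :=
        tendsto_atTop_add_const_right _ _ tendsto_natCast_atTop_atTop
      have := ((tendsto_rpow_neg_atTop (by linarith : 0 < 1 - r)).comp h1).const_mul (α * r * k)
      simpa using this
    refine tendsto_of_tendsto_of_tendsto_of_le_of_le tendsto_const_nhds hlim (fun N => ?_) fun N => ?_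
    · have h1 : ((N : ℝ) + 1) ^ r ≤ (((k + N : ℕ) : ℝ) + 1) ^ r := by
        apply Real.rpow_le_rpow (by positivity) _ hr0.le
        push_cast; have : (0 : ℝ) ≤ k := by positivity
        linarith
      simp only [sub_nonneg]; gcongr
    · have hx : (0 : ℝ) < (N : ℝ) + 1 := by positivity
      have h1 := rpow_one_add_le_one_add_mul_self (s := (k : ℝ) / ((N : ℝ) + 1))
        (by have : 0 ≤ (k : ℝ) / ((N : ℝ) + 1) := by positivity
            linarith) hr0.le hr1.le
      have h2 : (((k + N : ℕ) : ℝ) + 1) ^ r = ((N : ℝ) + 1) ^ r * (1 + (k : ℝ) / ((N : ℝ) + 1)) ^ r := by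
        rw [← Real.mul_rpow hx.le (by positivity)]
        congr 1; push_cast; field_simp; ring
      have h3 : ((N : ℝ) + 1) ^ (-(1 - r)) = ((N : ℝ) + 1) ^ r / ((N : ℝ) + 1) := by
        rw [← Real.rpow_sub_one hx.ne']; congr 1; ring
      simp only
      rw [h2, h3]
      have h4 : 0 < ((N : ℝ) + 1) ^ r := by positivity
      calc _ = α * ((N : ℝ) + 1) ^ r * ((1 + (k : ℝ) / ((N : ℝ) + 1)) ^ r - 1) := by ring
        _ ≤ α * ((N : ℝ) + 1) ^ r * (r * ((k : ℝ) / ((N : ℝ) + 1))) := by gcongr; linarith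
        _ = _ := by ring

/-- The half-shift operator. -/
noncomputable def gpT (a : ℕ → ℝ) : ℕ → ℝ := fun k => a (k + 1) - a k / 2

lemma gpT_lin (M : ℕ) : ∀ a b : ℕ → ℝ, gpT^[M] (fun k => 1 / 2 * (a k - b k)) =
    fun k => 1 / 2 * ((gpT^[M] a) k - (gpT^[M] b) k) := by
  induction M with
  | zero => intro a b; rfl
  | succ i ih =>
    intro a b
    simp only [Function.iterate_succ, Function.comp]
    rw [← ih]
    congr 1; ext k; simp only [gpT]; ring

lemma gpT_bd (M : ℕ) : ∀ {a : ℕ → ℝ}, gpCM a → ∀ k, |(gpT^[M] a) k| ≤ (1 / 2) ^ M * a k := by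
  induction M with
  | zero => intro a ha k; simp [abs_of_nonneg (gpCM_nonneg ha k)]
  | succ M ih =>
    intro a ha k
    have h1 : gpT a = fun k => 1 / 2 * (a (k + 1) - gpDf a k) := by
      ext k; simp only [gpT, gpDf]; ring
    rw [Function.iterate_succ_apply, h1, gpT_lin, abs_mul, abs_of_pos (by norm_num : (0 : ℝ) < 1 / 2)]
    have h2 := ih (gpCM_shift 1 ha) k
    have h3 := ih (gpCM_D ha) k
    have h4 := abs_sub ((gpT^[M] fun k => a (k + 1)) k) ((gpT^[M] (gpDf a)) k)
    have h5 : (1 / 2 : ℝ) ^ M * a (k + 1) + (1 / 2) ^ M * gpDf a k = (1 / 2) ^ M * a k := by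
      simp only [gpDf]; ring
    rw [pow_succ]
    linarith


lemma gpT_step {b : ℕ → ℝ} (hb : Summable fun k => |b k|) {z : ℂ} (hz : ‖z‖ = 1) :
    (1 - z / 2) * ∑' k, (b k : ℂ) * z ^ k = b 0 + z * ∑' k, (gpT b k : ℂ) * z ^ k := by
  have h1 : ∀ c : ℕ → ℝ, Summable (fun k => |c k|) → Summable fun k => (c k : ℂ) * z ^ k := by
    intro c hc
    refine Summable.of_norm (hc.congr fun k => ?_)
    rw [norm_mul, norm_pow, hz, one_pow, mul_one, Complex.norm_real, Real.norm_eq_abs]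
  have hS : Summable fun k => |b (k + 1)| := (summable_nat_add_iff 1).2 hb
  have e1 := (h1 b hb).tsum_eq_zero_add
  have e2 : ∑' k, (gpT b k : ℂ) * z ^ k =
      ∑' k, (b (k + 1) : ℂ) * z ^ k - 1 / 2 * ∑' k, (b k : ℂ) * z ^ k := by
    rw [← tsum_mul_left, ← ((h1 (fun k => b (k + 1)) hS).tsum_sub ((h1 b hb).mul_left (1 / 2)))]
    refine tsum_congr fun k => ?_
    simp only [gpT]; push_cast; ring
  have e3 : ∑' k, (b (k + 1) : ℂ) * z ^ (k + 1) = z * ∑' k, (b (k + 1) : ℂ) * z ^ k := by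
    rw [← tsum_mul_left]
    refine tsum_congr fun k => ?_
    ring
  rw [e3] at e1
  simp only [pow_zero, mul_one] at e1
  rw [e2]
  linear_combination e1

lemma gp_series {a : ℕ → ℝ} (ha : gpCM a) (hs : Summable a) {z : ℂ} (hz : ‖z‖ = 1)
    (hz1 : 1 < ‖2 - z‖) :
    HasSum (fun m => ((2 ^ m * (gpT^[m] a) 0 : ℝ) : ℂ) * (z / (2 - z)) ^ m)
      ((1 - z / 2) * ∑' k, (a k : ℂ) * z ^ k) := by
  have h2z : 2 - z ≠ 0 := fun h => by rw [h] at hz1; simp at hz1; linarith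
  set v := z / (2 - z) with hv
  have hv1 : ‖v‖ < 1 := by
    rw [hv, norm_div, hz]
    exact (div_lt_one (by linarith)).2 hz1
  have hvz : (1 - z / 2) * (2 * v) = z := by rw [hv]; field_simp
  have hsT : ∀ M, Summable fun k => |(gpT^[M] a) k| := fun M =>
    Summable.of_nonneg_of_le (fun k => abs_nonneg _) (gpT_bd M ha) (hs.mul_left _)
  have key : ∀ M, (1 - z / 2) * ∑' k, (a k : ℂ) * z ^ k =
      ∑ m ∈ Finset.range M, ((2 ^ m * (gpT^[m] a) 0 : ℝ) : ℂ) * v ^ m +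
      (2 * v) ^ M * ((1 - z / 2) * ∑' k, ((gpT^[M] a) k : ℂ) * z ^ k) := by
    intro M
    induction M with
    | zero => simp
    | succ M ih =>
      rw [ih, gpT_step (hsT M) hz, Finset.sum_range_succ, Function.iterate_succ_apply']
      push_cast
      rw [pow_succ (2 * v)]
      generalize ∑' k, (gpT (gpT^[M] a) k : ℂ) * z ^ k = X
      linear_combination (-(2 * v) ^ M * X) * hvz
  have hsum : Summable (fun m => ((2 ^ m * (gpT^[m] a) 0 : ℝ) : ℂ) * v ^ m) := by
    refine Summable.of_norm_bounded ((summable_geometric_of_lt_one (norm_nonneg v) hv1).mul_left (a 0)) fun m => ?_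
    rw [norm_mul, norm_pow, Complex.norm_real, Real.norm_eq_abs, abs_mul, abs_of_pos (by positivity)]
    gcongr
    calc _ ≤ (2 : ℝ) ^ m * ((1 / 2) ^ m * a 0) := by gcongr; exact gpT_bd m ha 0
      _ = a 0 := by rw [← mul_assoc, ← mul_pow]; norm_num
  rw [hsum.hasSum_iff_tendsto_nat]
  set F := (1 - z / 2) * ∑' k, (a k : ℂ) * z ^ k with hF
  have hrem : Tendsto (fun M => (2 * v) ^ M * ((1 - z / 2) * ∑' k, ((gpT^[M] a) k : ℂ) * z ^ k))
      atTop (nhds 0) := by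
    have hlim : Tendsto (fun M : ℕ => ‖v‖ ^ M * (‖1 - z / 2‖ * ∑' k, a k)) atTop (nhds 0) := by
      have := (tendsto_pow_atTop_nhds_zero_of_lt_one (norm_nonneg v) hv1).mul_const (‖1 - z / 2‖ * ∑' k, a k)
      rwa [zero_mul] at this
    refine squeeze_zero_norm (fun M => ?_) hlim
    have h3 : ‖∑' k, ((gpT^[M] a) k : ℂ) * z ^ k‖ ≤ (1 / 2) ^ M * ∑' k, a k := by
      rw [← tsum_mul_left]
      refine tsum_of_norm_bounded (hs.mul_left _).hasSum fun k => ?_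
      rw [norm_mul, norm_pow, hz, one_pow, mul_one, Complex.norm_real, Real.norm_eq_abs]
      exact gpT_bd M ha k
    rw [norm_mul, norm_mul, norm_pow, norm_mul, Complex.norm_ofNat]
    calc _ ≤ (2 * ‖v‖) ^ M * (‖1 - z / 2‖ * ((1 / 2) ^ M * ∑' k, a k)) := by gcongr
      _ = (2 * (1 / 2)) ^ M * (‖v‖ ^ M * (‖1 - z / 2‖ * ∑' k, a k)) := by rw [mul_pow, mul_pow]; ring
      _ = _ := by norm_num
  have h4 := hrem.const_sub F
  rw [sub_zero] at h4
  refine h4.congr fun M => ?_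
  have := key M
  linear_combination this

lemma gp_psum_analytic {c : ℕ → ℝ} {C : ℝ} (hc : ∀ m, |c m| ≤ C) {v : ℂ} (hv : ‖v‖ < 1) :
    AnalyticAt ℂ (fun w : ℂ => ∑' m, (c m : ℂ) * w ^ m) v := by
  obtain ⟨ρ, h1, h2⟩ := exists_between hv
  have hρ : 0 ≤ ρ := (norm_nonneg v).trans h1.le
  have hd : DifferentiableOn ℂ (fun w : ℂ => ∑' m, (c m : ℂ) * w ^ m) (Metric.ball 0 ρ) := by
    refine Complex.differentiableOn_tsum_of_summable_norm
      ((summable_geometric_of_lt_one hρ h2).mul_left C) (fun i => by fun_prop) Metric.isOpen_ball fun i w hw => ?_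
    rw [mem_ball_zero_iff] at hw
    rw [norm_mul, norm_pow, Complex.norm_real, Real.norm_eq_abs]
    have := (abs_nonneg _).trans (hc i)
    gcongr
    exact hc i
  exact hd.analyticAt (Metric.isOpen_ball.mem_nhds (by rwa [mem_ball_zero_iff]))

lemma gp_K_analytic {α r β : ℝ} (hα : 0 < α) (hr0 : 0 < r) (hr1 : r < 1)
    (ha : Summable fun k : ℕ => Real.exp (-α * ((k : ℝ) + 1) ^ r)) :
    AnalyticOnNhd ℝ (genPoissonKernel α r β) (Set.Ioo 0 (2 * π)) := by
  set a : ℕ → ℝ := fun k => Real.exp (-α * ((k : ℝ) + 1) ^ r) with haa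
  have hCM : gpCM a := gpCM_a hα hr0 hr1
  set c : ℕ → ℝ := fun m => 2 ^ m * (gpT^[m] a) 0 with hc
  have hcb : ∀ m, |c m| ≤ a 0 := fun m => by
    rw [hc, abs_mul, abs_of_pos (by positivity)]
    calc _ ≤ (2 : ℝ) ^ m * ((1 / 2) ^ m * a 0) := by gcongr; exact gpT_bd m hCM 0
      _ = a 0 := by rw [← mul_assoc, ← mul_pow]; norm_num
  set Z : ℂ → ℂ := fun τ => Complex.exp (τ * Complex.I) with hZ
  set Φ : ℂ → ℂ := fun τ => Complex.exp ((-(β * π / 2) : ℝ) * Complex.I) * Z τ *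
    ((∑' m, (c m : ℂ) * (Z τ / (2 - Z τ)) ^ m) / (1 - Z τ / 2)) with hΦ
  have hZ1 : ∀ t : ℝ, ‖Z t‖ = 1 := fun t => Complex.norm_exp_ofReal_mul_I t
  have hZ2 : ∀ t ∈ Set.Ioo 0 (2 * π), 1 < ‖2 - Z t‖ := by
    intro t ht
    have hcos : Real.cos t < 1 := by
      refine lt_of_le_of_ne (Real.cos_le_one t) fun h => ?_
      have := (Real.cos_eq_one_iff_of_lt_of_lt (by linarith [ht.1, Real.pi_pos]) ht.2).1 h
      linarith [ht.1]
    refine lt_of_pow_lt_pow_left₀ 2 (norm_nonneg _) ?_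
    rw [← Complex.normSq_eq_norm_sq, Complex.normSq_apply]
    simp only [hZ, Complex.sub_re, Complex.sub_im, Complex.exp_ofReal_mul_I_re, Complex.exp_ofReal_mul_I_im]
    have := Real.sin_sq_add_cos_sq t
    norm_num
    nlinarith
  have hΦa : ∀ t ∈ Set.Ioo 0 (2 * π), AnalyticAt ℂ Φ (t : ℝ) := by
    intro t ht
    have h2z : 2 - Z t ≠ 0 := fun h => by have := hZ2 t ht; rw [h] at this; simp at this; linarith
    have h3z : 1 - Z t / 2 ≠ 0 := fun h => h2z (by linear_combination 2 * h)
    have hZa : AnalyticAt ℂ Z t := by simp only [hZ]; fun_prop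
    have hv : AnalyticAt ℂ (fun τ => Z τ / (2 - Z τ)) t := hZa.div (analyticAt_const.sub hZa) h2z
    have hv1 : ‖Z t / (2 - Z t)‖ < 1 := by
      rw [norm_div, hZ1]
      exact (div_lt_one (by linarith [hZ2 t ht])).2 (hZ2 t ht)
    have hG := AnalyticAt.fun_comp (g := fun w : ℂ => ∑' m, (c m : ℂ) * w ^ m)
      (f := fun τ => Z τ / (2 - Z τ)) (gp_psum_analytic hcb hv1) hv
    have h1 : AnalyticAt ℂ (fun τ => 1 - Z τ / 2) t := analyticAt_const.sub (hZa.div analyticAt_const two_ne_zero)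
    exact (analyticAt_const.mul hZa).mul (hG.div h1 h3z)
  have heq : ∀ t ∈ Set.Ioo 0 (2 * π), genPoissonKernel α r β t = (Φ t).re := by
    intro t ht
    have h2z : 2 - Z t ≠ 0 := fun h => by have := hZ2 t ht; rw [h] at this; simp at this; linarith
    have h3z : 1 - Z t / 2 ≠ 0 := fun h => h2z (by linear_combination 2 * h)
    have h1 := (gp_series hCM ha (hZ1 t) (hZ2 t ht)).tsum_eq
    simp only [hΦ]
    simp only [hc]
    rw [h1, mul_div_cancel_left₀ _ h3z, ← tsum_mul_left, Complex.re_tsum]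
    · unfold genPoissonKernel
      refine tsum_congr fun k => ?_
      simp only [hZ]
      rw [mul_left_comm, ← Complex.exp_nat_mul, ← Complex.exp_add, ← Complex.exp_add,
        Complex.re_ofReal_mul, show (-(β * π / 2) : ℝ) * Complex.I + t * Complex.I + k * (t * Complex.I) =
          ((((k : ℝ) + 1) * t - β * π / 2 : ℝ) : ℂ) * Complex.I by push_cast; ring,
        Complex.exp_ofReal_mul_I_re]
    · refine Summable.mul_left _ (Summable.of_norm (ha.congr fun k => ?_))
      rw [norm_mul, norm_pow, hZ1, one_pow, mul_one, Complex.norm_real, Real.norm_of_nonneg (Real.exp_pos _).le]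
  intro t ht
  refine (hΦa t ht).re_ofReal.congr ?_
  filter_upwards [isOpen_Ioo.mem_nhds ht] with x hx using (heq x hx).symm


lemma gp_K_eq {α r β : ℝ} (x : ℝ) : genPoissonKernel α r β x = 0 / 2 + ∑' k : ℕ,
    (Real.exp (-α * ((k : ℝ) + 1) ^ r) * Real.cos (β * π / 2) * Real.cos (((k : ℝ) + 1) * x) +
     Real.exp (-α * ((k : ℝ) + 1) ^ r) * Real.sin (β * π / 2) * Real.sin (((k : ℝ) + 1) * x)) := by
  unfold genPoissonKernel
  rw [zero_div, zero_add]
  refine tsum_congr fun k => ?_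
  rw [Real.cos_sub]; ring

lemma gp_K_usum {α r c : ℝ} (ha : Summable fun k : ℕ => Real.exp (-α * ((k : ℝ) + 1) ^ r)) :
    Summable fun k : ℕ => |Real.exp (-α * ((k : ℝ) + 1) ^ r) * c| := by
  simp_rw [abs_mul, Real.abs_exp]
  exact ha.mul_right _

lemma gp_K_cont {α r β : ℝ} (ha : Summable fun k : ℕ => Real.exp (-α * ((k : ℝ) + 1) ^ r)) :
    Continuous (genPoissonKernel α r β) := by
  have h := gp_trig_cont (gp_K_usum (c := Real.cos (β * π / 2)) ha) (gp_K_usum (c := Real.sin (β * π / 2)) ha)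
  refine h.congr fun x => ?_
  rw [gp_K_eq, zero_div, zero_add]

lemma gp_K_ne {α r β : ℝ} (ha : Summable fun k : ℕ => Real.exp (-α * ((k : ℝ) + 1) ^ r)) :
    ∃ x, genPoissonKernel α r β x ≠ 0 := by
  by_contra! h
  obtain ⟨_, h1, h2⟩ := gp_coef (gp_K_usum (c := Real.cos (β * π / 2)) ha)
    (gp_K_usum (c := Real.sin (β * π / 2)) ha) (fun x => gp_K_eq (α := α) (r := r) (β := β) x)
  have h1 := h1 0
  have h2 := h2 0
  simp only [fourierCoefA, fourierCoefB, h, zero_mul, intervalIntegral.integral_zero, mul_zero] at h1 h2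
  have he := (Real.exp_pos (-α * (((0 : ℕ) : ℝ) + 1) ^ r)).ne'
  have h1' := (mul_eq_zero.1 h1.symm).resolve_left he
  have h2' := (mul_eq_zero.1 h2.symm).resolve_left he
  have := Real.sin_sq_add_cos_sq (β * π / 2)
  rw [h1', h2'] at this
  norm_num at this

lemma gp_K_countable {α r β : ℝ} (hα : 0 < α) (hr0 : 0 < r) (hr1 : r < 1)
    (ha : Summable fun k : ℕ => Real.exp (-α * ((k : ℝ) + 1) ^ r)) :
    {x | genPoissonKernel α r β x = 0}.Countable := by
  set K := genPoissonKernel α r β with hK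
  have hper : Function.Periodic K (2 * π) := gp_K_periodic α r β
  have h2pi : 0 < 2 * π := by positivity
  have hmem : ∀ x, ∃ n : ℤ, x - n * (2 * π) ∈ Set.Ico 0 (2 * π) := fun x => by
    obtain ⟨n, hn, _⟩ := existsUnique_sub_zsmul_mem_Ico h2pi x 0
    exact ⟨n, by simpa using hn⟩
  have han := gp_K_analytic (β := β) hα hr0 hr1 ha
  have hne : ¬ Set.EqOn K 0 (Set.Ioo 0 (2 * π)) := by
    intro h0
    have hcl : Set.EqOn K 0 (closure (Set.Ioo 0 (2 * π))) := h0.closure (gp_K_cont ha) continuous_const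
    rw [closure_Ioo h2pi.ne] at hcl
    obtain ⟨x, hx⟩ := gp_K_ne (β := β) ha
    obtain ⟨n, hn⟩ := hmem x
    apply hx
    rw [← hK, ← hper.sub_int_mul_eq n]
    exact hcl (Set.Ico_subset_Icc_self hn)
  have hcnt : (Set.Ioo 0 (2 * π) ∩ {x | K x = 0}).Countable := by
    have h1 := (han.eqOn_zero_or_eventually_ne_zero_of_preconnected isPreconnected_Ioo).resolve_left hne
    have h2 : {x | K x = 0}ᶜ ∈ codiscreteWithin (Set.Ioo 0 (2 * π)) := h1
    have h3 := isDiscrete_iff_discreteTopology.mp (isDiscrete_of_codiscreteWithin h2)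
    rw [Set.inter_comm]
    exact TopologicalSpace.separableSpace_iff_countable.1 inferInstance
  have hsub : {x | K x = 0} ⊆ ⋃ n : ℤ, (fun y => y + n * (2 * π)) '' ((Set.Ioo 0 (2 * π) ∩ {x | K x = 0}) ∪ {0}) := by
    intro x hx
    obtain ⟨n, hn⟩ := hmem x
    refine Set.mem_iUnion.2 ⟨n, x - n * (2 * π), ?_, by ring⟩
    rcases hn.1.eq_or_lt with h | h
    · right; exact h.symm
    · left; exact ⟨⟨h, hn.2⟩, by change K _ = 0; rw [hper.sub_int_mul_eq n]; exact hx⟩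
  exact (Set.countable_iUnion fun n => (hcnt.union (Set.countable_singleton 0)).image _).mono hsub

lemma gp_NM {α r β : ℝ} (hα : 0 < α) (hr0 : 0 < r) (hr1 : r < 1)
    (ha : Summable fun k : ℕ => Real.exp (-α * ((k : ℝ) + 1) ^ r)) (φ : ℝ → ℝ) (x : ℝ)
    (h : AEStronglyMeasurable (fun t => genPoissonKernel α r β (x - t) * φ t)
      (volume.restrict (Set.Ioc (-π) π))) : AEStronglyMeasurable φ (volume.restrict (Set.Ioc (-π) π)) := by
  have hKc : Continuous fun t => genPoissonKernel α r β (x - t) := (gp_K_cont ha).comp (by fun_prop)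
  have h1 : AEStronglyMeasurable (fun t => (genPoissonKernel α r β (x - t))⁻¹ *
      (genPoissonKernel α r β (x - t) * φ t)) (volume.restrict (Set.Ioc (-π) π)) :=
    (hKc.measurable.inv.aestronglyMeasurable).mul h
  refine h1.congr ?_
  have hc : {t | genPoissonKernel α r β (x - t) = 0}.Countable :=
    (gp_K_countable (β := β) hα hr0 hr1 ha).preimage (f := fun t => x - t) (fun a b hab => by simpa using hab)
  have h0 : ∀ᵐ t ∂(volume.restrict (Set.Ioc (-π) π)), genPoissonKernel α r β (x - t) ≠ 0 := by
    refine ae_restrict_of_ae ?_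
    rw [ae_iff]
    simpa only [ne_eq, not_not] using hc.measure_zero volume
  filter_upwards [h0] with t ht
  rw [inv_mul_cancel_left₀ ht]


lemma gp_n0 {α r p : ℝ} (hr0 : 0 < r) (hr1 : r < 1) (hα : 0 < α) (hp : 1 < p) {n : ℕ}
    (hn : n₀fin α r p ≤ n) : 0 < n ∧
    1 / (α * r) * (n : ℝ) ^ (-r) + α * r * p * (n : ℝ) ^ (-(1 - r)) ≤ 1 / 729 := by
  have hpi := Real.pi_gt_three
  have hR : 0 < (1 / (3 * π) ^ 3) * (p - 1) / p := by
    have : 0 < p - 1 := by linarith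
    positivity
  have hR2 : (1 / (3 * π) ^ 3) * (p - 1) / p ≤ 1 / 729 := by
    have h1 : (1 / (3 * π) ^ 3) ≤ 1 / 729 := by
      apply one_div_le_one_div_of_le (by norm_num)
      calc (729 : ℝ) = (3 * 3) ^ 3 := by norm_num
        _ ≤ _ := by gcongr
    have h2 : (p - 1) / p ≤ 1 := by rw [div_le_one (by linarith)]; linarith
    have h3 : 0 ≤ (p - 1) / p := div_nonneg (by linarith) (by linarith)
    rw [mul_div_assoc]
    nlinarith
  have hlim : Tendsto (fun n : ℕ => 1 / (α * r) * (n : ℝ) ^ (-r) + α * r * p * (n : ℝ) ^ (-(1 - r)))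
      atTop (nhds 0) := by
    have h1 := ((tendsto_rpow_neg_atTop hr0).comp tendsto_natCast_atTop_atTop).const_mul (1 / (α * r))
    have h2 := ((tendsto_rpow_neg_atTop (by linarith : 0 < 1 - r)).comp
      tendsto_natCast_atTop_atTop).const_mul (α * r * p)
    have h3 := h1.add h2
    simp only [mul_zero, add_zero] at h3
    exact h3
  have hne : {n : ℕ | 0 < n ∧
    1 / (α * r) * (n : ℝ) ^ (-r) + α * r * p * (n : ℝ) ^ (-(1 - r)) ≤
      (1 / (3 * π) ^ 3) * (p - 1) / p}.Nonempty := by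
    obtain ⟨N, h1, h2⟩ := ((hlim.eventually (gt_mem_nhds hR)).and (eventually_gt_atTop 0)).exists
    exact ⟨N, h2, h1.le⟩
  have hm := Nat.sInf_mem hne
  change 0 < n₀fin α r p ∧ 1 / (α * r) * (n₀fin α r p : ℝ) ^ (-r) + α * r * p * (n₀fin α r p : ℝ) ^ (-(1 - r)) ≤
      (1 / (3 * π) ^ 3) * (p - 1) / p at hm
  obtain ⟨h1, h2⟩ := hm
  refine ⟨h1.trans_le hn, le_trans ?_ (h2.trans hR2)⟩
  have h3 : (0 : ℝ) < n₀fin α r p := by exact_mod_cast h1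
  have h4 : (n₀fin α r p : ℝ) ≤ n := by exact_mod_cast hn
  have h5 := Real.rpow_le_rpow_of_nonpos h3 h4 (by linarith : -r ≤ 0)
  have h6 := Real.rpow_le_rpow_of_nonpos h3 h4 (by linarith : -(1 - r) ≤ 0)
  have h7 : 0 < p := by linarith
  gcongr

lemma gp_arith {E X NR N κ M T1 ε Y : ℝ} (hε0 : 0 < ε) (hT10 : 0 ≤ T1) (hY : 0 ≤ Y)
    (hN0 : 0 ≤ N) (hX0 : 0 < X) (k0 : 0 ≤ κ) (k1 : κ ≤ 1)
    (f1 : E ≤ 1 / π * (X * NR)) (f2 : 1 / π * (X * (NR - 340 * ε * N)) ≤ E)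
    (d2 : |NR - κ * N| ≤ 500 * ε * N + 95) (e1 : N ≤ 2 * Y) (e2 : |N - M| ≤ 2 * T1 + 1) :
    |E / X - 1 / π * (κ * M)| ≤ (14 * π) ^ 2 * (T1 + ε * Y + 1) := by
  have hpi := Real.pi_gt_three
  have hT20 : 0 ≤ ε * Y := by positivity
  have hεN : ε * N ≤ 2 * (ε * Y) := by nlinarith
  generalize ε * Y = T2 at *
  have g1 : E / X ≤ 1 / π * NR := by
    rw [div_le_iff₀ hX0]; calc E ≤ _ := f1
      _ = _ := by ring
  have g2 : 1 / π * (NR - 340 * ε * N) ≤ E / X := by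
    rw [le_div_iff₀ hX0]; refine le_trans (le_of_eq ?_) f2; ring
  have e3 : |κ * N - κ * M| ≤ 2 * T1 + 1 := by
    rw [← mul_sub, abs_mul, abs_of_nonneg k0]
    have := abs_nonneg (N - M)
    nlinarith
  obtain ⟨a1, a2⟩ := abs_le.1 e3
  obtain ⟨b1, b2⟩ := abs_le.1 d2
  have hpi1 : 1 / π ≤ 1 := by rw [div_le_one (by linarith)]; linarith
  have hpi0 : 0 < 1 / π := by positivity
  have hW : 0 ≤ 1680 * T2 + 2 * T1 + 96 := by linarith
  have hbig : 1 / π * (1680 * T2 + 2 * T1 + 96) ≤ (14 * π) ^ 2 * (T1 + T2 + 1) := by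
    have h1 : (1764 : ℝ) ≤ (14 * π) ^ 2 := by nlinarith
    calc _ ≤ 1 * (1680 * T2 + 2 * T1 + 96) := by gcongr
      _ ≤ 1764 * (T1 + T2 + 1) := by linarith
      _ ≤ _ := by gcongr
  have hεN' : 500 * ε * N = 500 * (ε * N) := by ring
  have hεN'' : 340 * ε * N = 340 * (ε * N) := by ring
  have hεN0 : 0 ≤ ε * N := by positivity
  have u1 : 1 / π * NR - 1 / π * (κ * M) ≤ 1 / π * (1680 * T2 + 2 * T1 + 96) := by
    rw [← mul_sub]; gcongr; linarith
  have u2 : -(1 / π * (1680 * T2 + 2 * T1 + 96)) ≤ 1 / π * (NR - 340 * ε * N) - 1 / π * (κ * M) := by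
    rw [← mul_sub, ← mul_neg]; gcongr; linarith
  rw [abs_le]
  constructor <;> linarith

lemma gp_final {α r β p s : ℝ} (hr0 : 0 < r) (hr1 : r < 1) (hα : 0 < α) (hp : 1 < p) (hs : 1 < s)
    (hps : 1 / p + 1 / s = 1) {n : ℕ} (hn : n₀fin α r p ≤ n) {l ε : ℝ}
    (hl : l = α * r * (n : ℝ) ^ (r - 1)) (hε : ε = 1 / (l * n)) :
    |EnC α r β (ENNReal.ofReal p) n / Real.exp (-α * (n : ℝ) ^ r) -
      1 / π * (cosNormR s / (2 * π) ^ (1 / s) * (l ^ (-(1 / p)) * (2 * gpI s) ^ (1 / s)))| ≤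
      (14 * π) ^ 2 * (1 / (s - 1) * l ^ ((s - 1) / p) + ε * (l ^ (-(1 / p)) * p ^ (1 / s)) + 1) := by
  have hpi := Real.pi_gt_three
  obtain ⟨hn0, hcond⟩ := gp_n0 hr0 hr1 hα hp hn
  have hnR : (0 : ℝ) < n := by exact_mod_cast hn0
  have hl0 : 0 < l := by rw [hl]; positivity
  have hln : l * n = α * r * (n : ℝ) ^ r := by
    rw [hl, mul_assoc, Real.rpow_sub_one hnR.ne']; field_simp
  have hε' : ε = 1 / (α * r) * (n : ℝ) ^ (-r) := by
    rw [hε, hln, Real.rpow_neg hnR.le]; field_simp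
  have hl' : α * r * p * (n : ℝ) ^ (-(1 - r)) = l * p := by
    rw [hl, show -(1 - r) = r - 1 by ring]; ring
  rw [← hε', hl'] at hcond
  have hε0 : 0 < ε := by rw [hε]; positivity
  have hlp : l ≤ l * p := by nlinarith
  have hl1 : l ≤ 1 / 100 := by
    have : (1 : ℝ) / 729 ≤ 1 / 100 := by norm_num
    linarith
  have hN : 8 ≤ l * n := by
    have h1 : ε ≤ 1 / 729 := by have : 0 < l * p := by positivity
                                linarith
    have h2 : l * n = 1 / ε := by rw [hε, one_div_one_div]
    rw [h2, le_div_iff₀ hε0]; linarith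
  have hsum : Summable (fun k : ℕ => Real.exp (-gpg α r n k)) :=
    gpg_summable hα hr0 hr1 hnR hl hl0 (by linarith) hε hN
  obtain ⟨d1, d2⟩ := gp_mainD (c := -(β * π / 2)) hs hα hr0 hr1 hn0 hl hl0 hl1 hε hN
  obtain ⟨e1, e2⟩ := gp_mainE hs hp hps hl0
  have hη := d1 (π / n) (by rw [abs_of_pos (by positivity)])
  obtain ⟨f1, f2⟩ := gp_EnC (β := β) hp hs hps hn0 hsum
    (gp_NM hα hr0 hr1 (gp_a_summable hn0 hsum)) hη
  obtain ⟨k0, k1⟩ := gp_kappa hs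
  have hN0 : 0 ≤ gpN s (gpW l) := gpN_nonneg _ _
  have hs1 : 0 < s - 1 := by linarith
  have hp0 : 0 < p := by linarith
  exact gp_arith hε0 (by positivity) (by positivity) hN0 (Real.exp_pos _) k0 k1 f1 f2 d2
    (by linarith) e2

theorem statement1 (α r β p p' : ℝ)
    (hr0 : 0 < r) (hr1 : r < 1) (hα : 0 < α) (hp : 1 < p)
    (hpp' : 1 / p + 1 / p' = 1) :
    ∀ n : ℕ, n₀fin α r p ≤ n →
      ∃ γ : ℝ, |γ| ≤ (14 * π) ^ 2 ∧
        EnC α r β (ENNReal.ofReal p) n =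
          Real.exp (-α * (n : ℝ) ^ r) * (n : ℝ) ^ ((1 - r) / p) *
            (cosNormR p' / (π ^ ((1 : ℝ) + 1 / p') * (α * r) ^ (1 / p)) *
                (∫ t in Set.Ioi (0 : ℝ), ((t ^ 2 + 1) ^ (p' / 2))⁻¹) ^ (1 / p') +
              γ * (1 / (p' - 1) * (α * r) ^ ((p' - 1) / p) * (n : ℝ) ^ (-((1 - r) * (p' - 1))) +
                  p ^ (1 / p') * (α * r) ^ (-(1 + 1 / p)) * (n : ℝ) ^ (-r) +
                  (n : ℝ) ^ (-((1 - r) / p)))) := by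
  intro n hn
  have hpi := Real.pi_pos
  have hp0 : 0 < p := by linarith
  have h1p : 0 < 1 / p := by positivity
  have h1p1 : 1 / p < 1 := by rw [div_lt_one hp0]; exact hp
  have hs0 : 0 < p' := by
    have : 0 < 1 / p' := by linarith
    exact one_div_pos.1 this
  have hs : 1 < p' := by
    have : 1 / p' < 1 := by linarith
    rwa [div_lt_one hs0] at this
  obtain ⟨hn0, -⟩ := gp_n0 hr0 hr1 hα hp hn
  have hnR : (0 : ℝ) < n := by exact_mod_cast hn0
  have hfin := gp_final (β := β) hr0 hr1 hα hp hs hpp' hn rfl rfl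
  have hI0 : 0 ≤ gpI p' := by
    unfold gpI
    exact setIntegral_nonneg measurableSet_Ioi fun t _ => by positivity
  change ∃ γ : ℝ, |γ| ≤ (14 * π) ^ 2 ∧
        EnC α r β (ENNReal.ofReal p) n =
          Real.exp (-α * (n : ℝ) ^ r) * (n : ℝ) ^ ((1 - r) / p) *
            (cosNormR p' / (π ^ ((1 : ℝ) + 1 / p') * (α * r) ^ (1 / p)) *
                (gpI p') ^ (1 / p') +
              γ * (1 / (p' - 1) * (α * r) ^ ((p' - 1) / p) * (n : ℝ) ^ (-((1 - r) * (p' - 1))) +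
                  p ^ (1 / p') * (α * r) ^ (-(1 + 1 / p)) * (n : ℝ) ^ (-r) +
                  (n : ℝ) ^ (-((1 - r) / p))))
  have hαr : 0 < α * r := by positivity
  have hlx : ∀ x : ℝ, (α * r * (n : ℝ) ^ (r - 1)) ^ x = (α * r) ^ x * (n : ℝ) ^ ((r - 1) * x) := fun x => by
    rw [Real.mul_rpow hαr.le (by positivity), ← Real.rpow_mul hnR.le]
  set B := 1 / (p' - 1) * (α * r) ^ ((p' - 1) / p) * (n : ℝ) ^ (-((1 - r) * (p' - 1))) +
                  p ^ (1 / p') * (α * r) ^ (-(1 + 1 / p)) * (n : ℝ) ^ (-r) +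
                  (n : ℝ) ^ (-((1 - r) / p)) with hB
  set P := (n : ℝ) ^ ((1 - r) / p) with hP
  have hP0 : 0 < P := by positivity
  have hX0 := Real.exp_pos (-α * (n : ℝ) ^ r)
  set X := Real.exp (-α * (n : ℝ) ^ r) with hX
  set Mn := cosNormR p' / (π ^ ((1 : ℝ) + 1 / p') * (α * r) ^ (1 / p)) * (gpI p') ^ (1 / p') with hMn
  have hB0 : 0 < B := by
    have : 0 < p' - 1 := by linarith
    positivity
  have hexp : (p' - 1) / p = p' - 1 - 1 / p := by
    have h := hpp'
    field_simp at h ⊢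
    nlinarith
  have hPB : P * B = 1 / (p' - 1) * (α * r * (n : ℝ) ^ (r - 1)) ^ ((p' - 1) / p) +
      1 / (α * r * (n : ℝ) ^ (r - 1) * n) * ((α * r * (n : ℝ) ^ (r - 1)) ^ (-(1 / p)) * p ^ (1 / p')) + 1 := by
    have q1 : P * (n : ℝ) ^ (-((1 - r) * (p' - 1))) = (n : ℝ) ^ ((r - 1) * ((p' - 1) / p)) := by
      rw [hP, ← Real.rpow_add hnR]; congr 1; rw [hexp]; ring
    have q2 : P * (n : ℝ) ^ (-((1 - r) / p)) = 1 := by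
      rw [hP, ← Real.rpow_add hnR, add_neg_cancel, Real.rpow_zero]
    have q3 : (α * r) ^ (-(1 + 1 / p)) = (α * r)⁻¹ * (α * r) ^ (-(1 / p)) := by
      rw [← Real.rpow_neg_one, ← Real.rpow_add hαr]; congr 1; ring
    have q4 : (n : ℝ) ^ ((r - 1) * -(1 / p)) = P := by
      rw [hP]; congr 1; ring
    have q5 : 1 / (α * r * (n : ℝ) ^ (r - 1) * n) = (α * r)⁻¹ * (n : ℝ) ^ (-r) := by
      rw [Real.rpow_neg hnR.le, Real.rpow_sub_one hnR.ne']; field_simp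
    rw [hlx, hlx, q4, q5, ← q1, hB, q3]
    linear_combination q2
  have hPM : P * Mn = 1 / π * (cosNormR p' / (2 * π) ^ (1 / p') *
      ((α * r * (n : ℝ) ^ (r - 1)) ^ (-(1 / p)) * (2 * gpI p') ^ (1 / p'))) := by
    have q4 : (n : ℝ) ^ ((r - 1) * -(1 / p)) = P := by
      rw [hP]; congr 1; ring
    rw [hlx, q4, hMn, Real.mul_rpow two_pos.le hpi.le, Real.mul_rpow two_pos.le hI0,
      Real.rpow_add hpi, Real.rpow_one, Real.rpow_neg hαr.le]
    have w1 : (0 : ℝ) < 2 ^ (1 / p') := by positivity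
    have w2 : (0 : ℝ) < π ^ (1 / p') := by positivity
    have w3 : (0 : ℝ) < (α * r) ^ (1 / p) := by positivity
    generalize (2 : ℝ) ^ (1 / p') = a at *
    generalize π ^ (1 / p') = b at *
    generalize (α * r) ^ (1 / p) = c at *
    field_simp
  rw [← hPB, ← hPM] at hfin
  refine ⟨(EnC α r β (ENNReal.ofReal p) n / X - P * Mn) / (P * B), ?_, ?_⟩
  · rw [abs_div, abs_of_pos (mul_pos hP0 hB0), div_le_iff₀ (mul_pos hP0 hB0)]
    exact hfin
  · generalize EnC α r β (ENNReal.ofReal p) n = E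
    field_simp
    ring
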